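/- arXiv:math/0611901 — 2 statements merged into one kernel-verified Lean document; each statement's English description precedes it below -/
import Mathlib

section
/- Let n ≥ 1, n/(n+1) < p ≤ 1, and let Ω ⊆ ℝⁿ be a domain (nonempty open connected proper subset). There is a constant C = C(n,p) ≥ 1 such that for every locally integrable f : Ω → ℝ the following hold, where 𝔐_Ω f(x) := max_{1≤j≤n} sup { |∫_Ω f ∂_j φ dm| : 0 < r' ≤ dist(x,∂Ω)/2, φ ∈ A_1(B(x,r')) } for x ∈ Ω: (i) if g ∈ L^p(Ω) is a ball-Hajlasz gradient of f on Ω, then ‖𝔐_Ω f‖_{L^p(Ω)} ≤ C ‖g‖_{L^p(Ω)}; (ii) if 𝔐_Ω f ∈ L^p(Ω), then C·𝔐_Ω f is a ball-Hajlasz gradient of f on Ω. In particular the Hardy–Sobolev space H^{1,p}(Ω) equals M^{1,p}_{ball}(Ω) with equivalent quasinorms. -/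
open MeasureTheory Metric Set ENNReal NNReal

noncomputable section

/-- The partial derivative `∂_j φ` in the `j`-th coordinate direction. -/
def pderivIdx (n : ℕ) (j : Fin n) (φ : EuclideanSpace ℝ (Fin n) → ℝ)
    (x : EuclideanSpace ℝ (Fin n)) : ℝ :=
  fderiv ℝ φ x (EuclideanSpace.single j 1)

/-- The `L^p` quasinorm (for a positive real exponent `p`) of a real function
with respect to the measure `μ`. -/
def lpNorm (n : ℕ) (p : ℝ) (g : EuclideanSpace ℝ (Fin n) → ℝ)
    (μ : Measure (EuclideanSpace ℝ (Fin n))) : ℝ≥0∞ :=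
  (∫⁻ x, ENNReal.ofReal |g x| ^ p ∂μ) ^ (1 / p)

/-- `g` is a ball-Hajlasz gradient of `u` on the domain `Ω`: the Hajlasz inequality is
required only for a.e. pairs of points `x, y ∈ Ω` with
`‖x - y‖ ≤ (1/4) min (dist(x,∂Ω), dist(y,∂Ω))`. -/
def IsBallHajlaszGradientOn (n : ℕ) (u g : EuclideanSpace ℝ (Fin n) → ℝ)
    (Ω : Set (EuclideanSpace ℝ (Fin n))) : Prop :=
  Measurable g ∧ (∀ x, 0 ≤ g x) ∧
    ∃ E : Set (EuclideanSpace ℝ (Fin n)), MeasureTheory.volume E = 0 ∧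
      ∀ x ∈ Ω \ E, ∀ y ∈ Ω \ E,
        ‖x - y‖ ≤ (1 / 4) * min (infDist x (frontier Ω)) (infDist y (frontier Ω)) →
        |u x - u y| ≤ ‖x - y‖ * (g x + g y)

/-- The class `A_1(B(z,r'))` of smooth test functions supported in `B(z,r')` with
`|φ| ≤ r'^{-n}` and `|∂_j φ| ≤ r'^{-n-1}` for each `j`. -/
def memTestClassOne (n : ℕ) (z : EuclideanSpace ℝ (Fin n)) (r' : ℝ)
    (φ : EuclideanSpace ℝ (Fin n) → ℝ) : Prop :=
  ContDiff ℝ (⊤ : ℕ∞) φ ∧ tsupport φ ⊆ ball z r' ∧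
    (∀ x, |φ x| ≤ (r'⁻¹) ^ n) ∧ ∀ (j : Fin n) (x), |pderivIdx n j φ x| ≤ (r'⁻¹) ^ (n + 1)

/-- Miyachi's grand maximal function (of order `1`) of the gradient of `f` on `Ω`:
`𝔐_Ω f(x) = max_j sup { |∫_Ω f ∂_j φ| : 0 < r' ≤ dist(x,∂Ω)/2, φ ∈ A_1(B(x,r')) }`. -/
def miyachiMax (n : ℕ) (Ω : Set (EuclideanSpace ℝ (Fin n)))
    (f : EuclideanSpace ℝ (Fin n) → ℝ) (x : EuclideanSpace ℝ (Fin n)) : ℝ≥0∞ :=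
  ⨆ j : Fin n, ⨆ (r' : {s : ℝ // 0 < s ∧ s ≤ infDist x (frontier Ω) / 2}),
    ⨆ (φ : {φ : EuclideanSpace ℝ (Fin n) → ℝ // memTestClassOne n x r'.1 φ}),
      ENNReal.ofReal |∫ y in Ω, f y * pderivIdx n j φ.1 y|

/-!
The upper bound on `𝔐_Ω f` comes from a Poincaré inequality with exponent `α ∈ (n/(n+1), 1)`,
`α < p`: on a ball `B` of radius `r ≤ dist(x,∂Ω)/2` the function `f` is within
`K r (⨍_B g^α)^{1/α}` of a constant in mean. Integrating `∂_j φ` against `f` minus that constant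
bounds `𝔐_Ω f` by a multiple of `(M(g^α))^{1/α}`, where `M` is the Hardy–Littlewood maximal
operator, which is bounded on `L^{p/α}` since `p/α > 1`. The Poincaré inequality is obtained by
chaining: every `y ∈ B` is reached along the segment from the center through balls shrinking
geometrically to `y`, each containing a point at which `g` is at most its `α`-mean over that ball.
After averaging over `y`, the condition `α > n/(n+1)` makes the resulting series converge.

For the pointwise bound, the derivative in `t` of the dilates `φ_t(z) = t^{-n} φ((z - x)/t)` is
minus the divergence of the dilates of `w ↦ w φ(w)`, so `𝔐_Ω f(x)` bounds the derivative of
`t ↦ ∫ f φ_t`. Letting `t → 0` at a Lebesgue point compares `f x` with a mollification at scale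
`‖x - y‖`, and the same mollifier serves both `x` and `y`.
-/

section LayerCake

variable {α : Type*} [MeasurableSpace α] {μ : Measure α} {f : α → ℝ≥0∞} {q : ℝ}

lemma lintegral_Ioi_rpow_eq_top (s : ℝ) :
    ∫⁻ t in Ioi (0 : ℝ), ENNReal.ofReal (t ^ s) = ⊤ := by
  by_contra hfinite
  refine not_integrableOn_Ioi_rpow s ((lintegral_ofReal_ne_top_iff_integrable ?_ ?_).1 hfinite)
  · exact (measurable_id.pow_const s).aestronglyMeasurable
  · filter_upwards [ae_restrict_mem measurableSet_Ioi] with t ht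
    exact Real.rpow_nonneg (le_of_lt ht) s

lemma lintegral_rpow_eq_lintegral_meas_ofReal_lt (hf : Measurable f) (hq : 0 < q) :
    ∫⁻ a, f a ^ q ∂μ =
      ENNReal.ofReal q *
        ∫⁻ t in Ioi (0 : ℝ), μ {a | ENNReal.ofReal t < f a} * ENNReal.ofReal (t ^ (q - 1)) := by
  by_cases hfinite : ∀ᵐ a ∂μ, f a ≠ ⊤
  · have hpow : ∫⁻ a, f a ^ q ∂μ = ∫⁻ a, ENNReal.ofReal ((f a).toReal ^ q) ∂μ := by
      refine lintegral_congr_ae (hfinite.mono fun a ha => ?_)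
      simp only [← ENNReal.ofReal_rpow_of_nonneg ENNReal.toReal_nonneg hq.le,
        ENNReal.ofReal_toReal ha]
    rw [hpow, lintegral_rpow_eq_lintegral_meas_lt_mul μ
      (.of_forall fun _ => ENNReal.toReal_nonneg) hf.ennreal_toReal.aemeasurable hq]
    congr 1
    refine setLIntegral_congr_fun measurableSet_Ioi fun t ht => ?_
    congr 1
    refine measure_congr (hfinite.mono fun a ha => propext ?_)
    exact (ENNReal.ofReal_lt_iff_lt_toReal (le_of_lt ht) ha).symm
  · have htop : μ {a | f a = ⊤} ≠ 0 := by simpa [ae_iff] using hfinite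
    have hleft : ∫⁻ a, f a ^ q ∂μ = ⊤ := by
      refine lintegral_eq_top_of_measure_eq_top_ne_zero (hf.pow_const q).aemeasurable ?_
      simpa [ENNReal.rpow_eq_top_iff_of_pos hq] using htop
    have hright : ∫⁻ t in Ioi (0 : ℝ), μ {a | f a = ⊤} * ENNReal.ofReal (t ^ (q - 1)) = ⊤ := by
      rw [lintegral_const_mul _ (by fun_prop), lintegral_Ioi_rpow_eq_top, ENNReal.mul_top htop]
    rw [hleft, eq_comm, eq_top_iff, ← ENNReal.mul_top (ENNReal.ofReal_pos.2 hq).ne', ← hright]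
    gcongr with t a
    rintro (ha : f a = ⊤)
    simp [ha]

lemma lintegral_withDensity_meas_lt_two_mul (hq : 1 < q) (hf : Measurable f) :
    ∫⁻ t in Ioi (0 : ℝ), μ.withDensity f {z | ENNReal.ofReal t < 2 * f z} *
      ENNReal.ofReal (t ^ (q - 1 - 1)) =
        (ENNReal.ofReal (q - 1))⁻¹ * 2 ^ (q - 1) * ∫⁻ x, f x ^ q ∂μ := by
  have hq' : 0 < q - 1 := sub_pos.2 hq
  have hdensity : ∫⁻ z, (2 * f z) ^ (q - 1) ∂(μ.withDensity f) =
      2 ^ (q - 1) * ∫⁻ x, f x ^ q ∂μ := by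
    rw [lintegral_withDensity_eq_lintegral_mul _ hf (by fun_prop),
      ← lintegral_const_mul _ (by fun_prop)]
    refine lintegral_congr fun z => ?_
    have hpow : f z ^ q = f z * f z ^ (q - 1) := by
      simpa using ENNReal.rpow_add_of_nonneg (x := f z) 1 (q - 1) zero_le_one hq'.le
    rw [Pi.mul_apply, ENNReal.mul_rpow_of_nonneg _ _ hq'.le, hpow]
    ring
  rw [mul_assoc, ← hdensity, lintegral_rpow_eq_lintegral_meas_ofReal_lt (hf.const_mul 2) hq',
    ← mul_assoc, ENNReal.inv_mul_cancel (ENNReal.ofReal_pos.2 hq').ne' ENNReal.ofReal_ne_top,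
    one_mul]

end LayerCake

section MaximalFunction

lemma lowerSemicontinuous_measure_ball {X : Type*} [PseudoMetricSpace X] [MeasurableSpace X]
    (ν : Measure X) (r : ℝ) : LowerSemicontinuous fun x => ν (ball x r) := by
  intro x c hc
  obtain ⟨u, hu_mono, hu_lt, hu_tendsto⟩ := exists_seq_strictMono_tendsto r
  have hunion : ball x r = ⋃ k, ball x (u k) := by
    ext z
    simp only [mem_ball, mem_iUnion]
    exact ⟨fun hz => (hu_tendsto.eventually_const_lt hz).exists,
      fun ⟨k, hk⟩ => hk.trans (hu_lt k)⟩
  have hmono : Monotone fun k => ball x (u k) := fun a b hab =>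
    ball_subset_ball (hu_mono.monotone hab)
  simp only [hunion, hmono.measure_iUnion, lt_iSup_iff] at hc
  obtain ⟨k, hk⟩ := hc
  filter_upwards [ball_mem_nhds x (sub_pos.2 (hu_lt k))] with y hy
  refine hk.trans_le (measure_mono (ball_subset_ball' ?_))
  rw [mem_ball'] at hy
  linarith

variable {E : Type*} [NormedAddCommGroup E] [MeasurableSpace E]

/-- The centred Hardy–Littlewood maximal function of a nonnegative function. -/
def hardyLittlewoodMaximal (μ : Measure E) (h : E → ℝ≥0∞) (x : E) : ℝ≥0∞ :=
  ⨆ (r : ℝ) (_ : 0 < r), ⨍⁻ z in ball x r, h z ∂μ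

variable {μ : Measure E} {h : E → ℝ≥0∞} {q : ℝ} {t : ℝ≥0∞}

lemma setLAverage_ball_le_hardyLittlewoodMaximal {x : E} {r : ℝ} (hr : 0 < r) :
    ⨍⁻ z in ball x r, h z ∂μ ≤ hardyLittlewoodMaximal μ h x :=
  le_iSup₂ (f := fun r (_ : 0 < r) => ⨍⁻ z in ball x r, h z ∂μ) r hr

lemma half_lt_hardyLittlewoodMaximal_indicator [ProperSpace E] [μ.IsOpenPosMeasure]
    [IsFiniteMeasureOnCompacts μ] {x : E} (hx : t < hardyLittlewoodMaximal μ h x) :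
    t / 2 < hardyLittlewoodMaximal μ ({z | t < 2 * h z}.indicator h) x := by
  simp only [hardyLittlewoodMaximal, lt_iSup_iff] at hx
  obtain ⟨r, hr, hx⟩ := hx
  have hball := (measure_ball_pos μ x hr).ne'
  have hsplit : ∀ z, h z ≤ {z | t < 2 * h z}.indicator h z + t / 2 := fun z => by
    by_cases hz : t < 2 * h z
    · simp [hz]
    · rw [indicator_of_notMem (by exact hz), zero_add,
        ENNReal.le_div_iff_mul_le (by simp) (by simp), mul_comm]
      exact not_lt.1 hz
  have haverage : ⨍⁻ z in ball x r, h z ∂μ ≤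
      (⨍⁻ z in ball x r, {z | t < 2 * h z}.indicator h z ∂μ) + t / 2 := by
    calc ⨍⁻ z in ball x r, h z ∂μ
        ≤ ⨍⁻ z in ball x r, ({z | t < 2 * h z}.indicator h z + t / 2) ∂μ :=
          lintegral_mono hsplit
      _ = _ := by
        rw [laverage, lintegral_add_right _ measurable_const, ← laverage, ← laverage,
          setLAverage_const hball measure_ball_lt_top.ne]
  refine lt_of_lt_of_le ?_ (setLAverage_ball_le_hardyLittlewoodMaximal hr)
  by_contra! hle
  exact (hx.trans_le (haverage.trans (by gcongr))).ne (ENNReal.add_halves t).symm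

variable [BorelSpace E] [μ.IsAddHaarMeasure]

lemma lowerSemicontinuous_hardyLittlewoodMaximal :
    LowerSemicontinuous (hardyLittlewoodMaximal μ h) := by
  refine lowerSemicontinuous_biSup fun r hr => ?_
  have haverage : (fun x => ⨍⁻ z in ball x r, h z ∂μ) =
      (fun c => c / μ (ball 0 r)) ∘ fun x => μ.withDensity h (ball x r) := by
    ext x
    simp only [Function.comp_apply, setLAverage_eq, withDensity_apply _ measurableSet_ball,
      Measure.addHaar_ball_center]
  rw [haverage]
  exact (ENNReal.continuous_div_const _ (measure_ball_pos μ 0 hr).ne').comp_lowerSemicontinuous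
    (lowerSemicontinuous_measure_ball _ r) fun _ _ hab => ENNReal.div_le_div_right hab _

lemma measurable_hardyLittlewoodMaximal : Measurable (hardyLittlewoodMaximal μ h) :=
  lowerSemicontinuous_hardyLittlewoodMaximal.measurable

variable [NormedSpace ℝ E] [FiniteDimensional ℝ E]

lemma exists_radius_bound_of_measure_ball_le [Nontrivial E] {c : ℝ≥0∞} (hc : c ≠ ⊤) :
    ∃ R : ℝ, ∀ (x : E) (r : ℝ), μ (ball x r) ≤ c → r ≤ R := by
  have : NoncompactSpace E := NormedSpace.noncompactSpace ℝ E
  have hgrowth : Filter.Tendsto (fun k : ℕ => μ (ball (0 : E) k)) Filter.atTop (nhds ⊤) := by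
    rw [← measure_univ_of_isAddLeftInvariant μ, ← iUnion_ball_nat (0 : E)]
    exact tendsto_measure_iUnion_atTop fun _ _ hab => ball_subset_ball (Nat.cast_le.2 hab)
  obtain ⟨R, hR⟩ := (hgrowth.eventually_const_lt hc.lt_top).exists
  refine ⟨R, fun x r hr => le_of_not_gt fun hlt => hR.not_ge ?_⟩
  rw [← Measure.addHaar_ball_center μ x]
  exact (measure_mono (ball_subset_ball hlt.le)).trans hr

lemma measure_le_of_forall_measure_ball_le [Nontrivial E] {ν : Measure E} {s : Set E} {r : E → ℝ}
    {R : ℝ} (hr_pos : ∀ x ∈ s, 0 < r x) (hr_le : ∀ x ∈ s, r x ≤ R)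
    (hμν : ∀ x ∈ s, μ (ball x (r x)) ≤ ν (ball x (r x))) :
    μ s ≤ 5 ^ Module.finrank ℝ E * ν univ := by
  obtain ⟨u, hu, hdisj, hcover⟩ := Vitali.exists_disjoint_subfamily_covering_enlargement_closedBall
    s (fun x => x) r R hr_le 5 (by norm_num)
  have hu_countable : u.Countable := hdisj.countable_of_nonempty_interior fun x hx =>
    ⟨x, ball_subset_interior_closedBall (mem_ball_self (hr_pos x (hu hx)))⟩
  have hsubset : s ⊆ ⋃ b ∈ u, closedBall b (5 * r b) := fun x hx => by
    obtain ⟨b, hb, hxb⟩ := hcover x hx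
    exact mem_biUnion hb (hxb (mem_closedBall_self (hr_pos x hx).le))
  have henlarge : ∀ b : u, μ (closedBall (b : E) (5 * r b)) ≤
      5 ^ Module.finrank ℝ E * ν (ball (b : E) (r b)) := fun b => by
    rw [Measure.addHaar_closedBall_eq_addHaar_ball,
      Measure.addHaar_ball_mul_of_pos μ _ (by norm_num),
      ← Measure.addHaar_ball_center μ (b : E), ENNReal.ofReal_pow (by norm_num),
      ENNReal.ofReal_ofNat]
    gcongr 5 ^ Module.finrank ℝ E * ?_
    exact hμν b (hu b.2)
  calc μ s
      ≤ μ (⋃ b ∈ u, closedBall b (5 * r b)) := measure_mono hsubset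
    _ ≤ ∑' b : u, μ (closedBall (b : E) (5 * r b)) := measure_biUnion_le _ hu_countable _
    _ ≤ ∑' b : u, 5 ^ Module.finrank ℝ E * ν (ball (b : E) (r b)) :=
        ENNReal.tsum_le_tsum henlarge
    _ = 5 ^ Module.finrank ℝ E * ν (⋃ b ∈ u, ball b (r b)) := by
        rw [ENNReal.tsum_mul_left, measure_biUnion hu_countable
          (hdisj.mono fun b => ball_subset_closedBall) (fun _ _ => measurableSet_ball)]
    _ ≤ 5 ^ Module.finrank ℝ E * ν univ := by
        gcongr
        exact subset_univ _

lemma measure_lt_hardyLittlewoodMaximal_le [Nontrivial E] (ht : t ≠ 0) (ht' : t ≠ ⊤) :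
    μ {x | t < hardyLittlewoodMaximal μ h x} ≤
      5 ^ Module.finrank ℝ E * (t⁻¹ * ∫⁻ z, h z ∂μ) := by
  rcases eq_or_ne (∫⁻ z, h z ∂μ) ⊤ with htop | hfinite
  · simp [htop, ENNReal.mul_top, ht']
  have hmass : (t⁻¹ • μ.withDensity h) univ = t⁻¹ * ∫⁻ z, h z ∂μ := by
    simp [withDensity_apply]
  have hlarge : ∀ x ∈ {x | t < hardyLittlewoodMaximal μ h x}, ∃ r, 0 < r ∧
      μ (ball x r) ≤ (t⁻¹ • μ.withDensity h) (ball x r) := fun x hx => by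
    simp only [hardyLittlewoodMaximal, mem_ofPred_eq, lt_iSup_iff, setLAverage_eq] at hx
    obtain ⟨r, hr, hx⟩ := hx
    refine ⟨r, hr, ?_⟩
    rw [Measure.smul_apply, withDensity_apply _ measurableSet_ball, smul_eq_mul,
      ← ENNReal.div_eq_inv_mul, ENNReal.le_div_iff_mul_le (.inl ht) (.inl ht'), mul_comm]
    exact ENNReal.mul_le_of_le_div hx.le
  choose! r hr_pos hr using hlarge
  obtain ⟨R, hR⟩ := exists_radius_bound_of_measure_ball_le (μ := μ)
    (ENNReal.mul_ne_top (ENNReal.inv_ne_top.2 ht) hfinite)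
  rw [← hmass] at hR ⊢
  exact measure_le_of_forall_measure_ball_le hr_pos
    (fun x hx => hR x _ ((hr x hx).trans (measure_mono (subset_univ _)))) hr

lemma measure_lt_hardyLittlewoodMaximal_le_setLIntegral [Nontrivial E] (hh : Measurable h)
    (ht : t ≠ 0) (ht' : t ≠ ⊤) :
    μ {x | t < hardyLittlewoodMaximal μ h x} ≤
      5 ^ Module.finrank ℝ E * ((t / 2)⁻¹ * ∫⁻ z in {z | t < 2 * h z}, h z ∂μ) := by
  rw [← lintegral_indicator (measurableSet_lt measurable_const (hh.const_mul 2))]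
  exact (measure_mono fun _ => half_lt_hardyLittlewoodMaximal_indicator).trans
    (measure_lt_hardyLittlewoodMaximal_le (by simp [ht]) (ENNReal.div_ne_top ht' two_ne_zero))

-- The level sets of `2 * h` are measured with density `h`, so that the layer cake formula applies
-- a second time, with exponent `q - 1`.
lemma lintegral_hardyLittlewoodMaximal_rpow_le [Nontrivial E] (hq : 1 < q) (hh : Measurable h) :
    ∫⁻ x, hardyLittlewoodMaximal μ h x ^ q ∂μ ≤
      ENNReal.ofReal q * (5 ^ Module.finrank ℝ E * 2) *
        ((ENNReal.ofReal (q - 1))⁻¹ * 2 ^ (q - 1)) * ∫⁻ x, h x ^ q ∂μ := by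
  set D : ℝ≥0∞ := 5 ^ Module.finrank ℝ E * 2
  have hweak : ∀ t ∈ Ioi (0 : ℝ),
      μ {x | ENNReal.ofReal t < hardyLittlewoodMaximal μ h x} * ENNReal.ofReal (t ^ (q - 1)) ≤
        D * (μ.withDensity h {z | ENNReal.ofReal t < 2 * h z} *
          ENNReal.ofReal (t ^ (q - 1 - 1))) := fun t (ht : 0 < t) => by
    have hbound := measure_lt_hardyLittlewoodMaximal_le_setLIntegral (μ := μ) hh
      (ENNReal.ofReal_pos.2 ht).ne' ENNReal.ofReal_ne_top
    rw [withDensity_apply _ (measurableSet_lt measurable_const (hh.const_mul 2)),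
      Real.rpow_sub_one ht.ne' (q - 1), ENNReal.ofReal_div_of_pos ht]
    refine (mul_le_mul_left hbound _).trans_eq ?_
    rw [ENNReal.inv_div (by simp) (by simp), div_eq_mul_inv, div_eq_mul_inv]
    ring
  rw [lintegral_rpow_eq_lintegral_meas_ofReal_lt measurable_hardyLittlewoodMaximal (by linarith)]
  calc _ ≤ ENNReal.ofReal q * ∫⁻ t in Ioi (0 : ℝ),
        D * (μ.withDensity h {z | ENNReal.ofReal t < 2 * h z} *
          ENNReal.ofReal (t ^ (q - 1 - 1))) := by
        gcongr ENNReal.ofReal q * ?_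
        exact setLIntegral_mono' measurableSet_Ioi hweak
    _ = _ := by
        rw [lintegral_const_mul' _ _ (ENNReal.mul_ne_top (by simp) (by simp)),
          lintegral_withDensity_meas_lt_two_mul hq hh]
        ring

end MaximalFunction

section Chain

/-- The `α`-power mean of `g` over `s`. -/
def powerMean {X : Type*} [MeasurableSpace X] (μ : Measure X) (α : ℝ) (g : X → ℝ≥0) (s : Set X) :
    ℝ≥0∞ :=
  (⨍⁻ z in s, (g z : ℝ≥0∞) ^ α ∂μ) ^ (1 / α)

lemma exists_mem_diff_null_le_powerMean {X : Type*} [MeasurableSpace X] {μ : Measure X} {α : ℝ}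
    {g : X → ℝ≥0} {s N : Set X} (hα : 0 < α) (hg : Measurable g) (hN : μ N = 0) (hs : μ s ≠ 0)
    (hs' : μ s ≠ ⊤) : ∃ z ∈ s \ N, g z ≤ powerMean μ α g s := by
  have hsN : μ (s \ N) = μ s := measure_sdiff_null hN
  obtain ⟨z, hz, hgz⟩ := exists_le_setLAverage (μ := μ) (f := fun z => (g z : ℝ≥0∞) ^ α)
    (hsN ▸ hs) (hsN ▸ hs') (by fun_prop)
  rw [setLAverage_congr (sdiff_null_ae_eq_self hN)] at hgz
  exact ⟨z, hz, by rwa [powerMean, one_div, ENNReal.le_rpow_inv_iff hα]⟩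

/-- The Hajłasz inequality for `f` and `g` at all pairs of points of `s` at distance at most `δ`. -/
def IsHajlaszGradientUpTo {X Y : Type*} [PseudoMetricSpace X] [PseudoEMetricSpace Y] (f : X → Y)
    (g : X → ℝ≥0) (s : Set X) (δ : ℝ) : Prop :=
  ∀ y ∈ s, ∀ z ∈ s, dist y z ≤ δ → edist (f y) (f z) ≤ edist y z * (g y + g z)

namespace IsHajlaszGradientUpTo

variable {X Y : Type*} [PseudoMetricSpace X] [PseudoEMetricSpace Y] {f : X → Y} {g : X → ℝ≥0}
  {s : Set X} {δ : ℝ} {Z : ℕ → X} {y : X}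

lemma tendsto_comp (hfg : IsHajlaszGradientUpTo f g s δ) (hδ : 0 < δ) (hZ : ∀ i, Z i ∈ s)
    (hy : y ∈ s) (hZy : Filter.Tendsto Z Filter.atTop (nhds y))
    (hZg : Filter.Tendsto (fun i => edist (Z i) y * g (Z i)) Filter.atTop (nhds 0)) :
    Filter.Tendsto (fun i => f (Z i)) Filter.atTop (nhds (f y)) := by
  have hlim : Filter.Tendsto (fun i => edist (Z i) y * (g (Z i) + g y)) Filter.atTop (nhds 0) := by
    simpa [mul_add] using hZg.add (ENNReal.Tendsto.mul_const (tendsto_iff_edist_tendsto_0.1 hZy)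
      (.inr (ENNReal.coe_ne_top (r := g y))))
  refine tendsto_iff_edist_tendsto_0.2 (tendsto_of_tendsto_of_tendsto_of_le_of_le'
    tendsto_const_nhds hlim (.of_forall fun _ => zero_le) ?_)
  filter_upwards [hZy (closedBall_mem_nhds y hδ)] with i hi using hfg _ (hZ i) _ hy hi

lemma edist_le_tsum (hfg : IsHajlaszGradientUpTo f g s δ) {ρ : ℕ → ℝ} {a : ℕ → ℝ≥0∞}
    (hδ : 0 < δ) (hZ : ∀ i, Z i ∈ s) (hy : y ∈ s) (hZδ : ∀ i, dist (Z i) (Z (i + 1)) ≤ δ)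
    (hZρ : ∀ i, dist (Z i) (Z (i + 1)) ≤ ρ i) (hZy : ∀ i, dist (Z i) y ≤ 2 * ρ i)
    (hρ : ∀ i, ρ i ≤ 2 * ρ (i + 1)) (hρ_lim : Filter.Tendsto ρ Filter.atTop (nhds 0))
    (hga : ∀ i, g (Z i) ≤ a i) :
    edist (f (Z 0)) (f y) ≤ 3 * ∑' i, ENNReal.ofReal (ρ i) * a i := by
  set b : ℕ → ℝ≥0∞ := fun i => ENNReal.ofReal (ρ i) * a i
  rcases eq_or_ne (∑' i, b i) ⊤ with htop | hsum
  · simp [htop, ENNReal.mul_top]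
  have htwo : ∀ c : ℝ, ENNReal.ofReal (2 * c) = 2 * ENNReal.ofReal c := fun c => by
    rw [ENNReal.ofReal_mul zero_le_two, ENNReal.ofReal_ofNat]
  have hstep : ∀ i, edist (f (Z i)) (f (Z (i + 1))) ≤ b i + 2 * b (i + 1) := fun i => by
    calc edist (f (Z i)) (f (Z (i + 1)))
        ≤ edist (Z i) (Z (i + 1)) * (g (Z i) + g (Z (i + 1))) := hfg _ (hZ i) _ (hZ _) (hZδ i)
      _ ≤ ENNReal.ofReal (ρ i) * (a i + a (i + 1)) := by
          rw [edist_dist]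
          gcongr
          exacts [hZρ i, hga i, hga (i + 1)]
      _ ≤ b i + ENNReal.ofReal (2 * ρ (i + 1)) * a (i + 1) := by
          rw [mul_add]
          gcongr
          exact hρ i
      _ = b i + 2 * b (i + 1) := by rw [htwo, mul_assoc]
  have hlim : Filter.Tendsto (fun i => f (Z i)) Filter.atTop (nhds (f y)) := by
    refine hfg.tendsto_comp hδ hZ hy (tendsto_iff_dist_tendsto_zero.2 (squeeze_zero
      (fun _ => dist_nonneg) hZy (by simpa using hρ_lim.const_mul 2))) ?_
    have hb_lim : Filter.Tendsto (fun i => 2 * b i) Filter.atTop (nhds 0) := by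
      simpa using ENNReal.Tendsto.const_mul (a := 2)
        (ENNReal.tendsto_atTop_zero_of_tsum_ne_top hsum) (.inr (by simp))
    refine tendsto_of_tendsto_of_tendsto_of_le_of_le tendsto_const_nhds hb_lim
      (fun _ => zero_le) fun i => ?_
    simp only [b, edist_dist, ← mul_assoc, ← htwo]
    gcongr
    exacts [hZy i, hga i]
  calc edist (f (Z 0)) (f y)
      ≤ ∑' i, (b i + 2 * b (i + 1)) := edist_le_tsum_of_edist_le_of_tendsto₀ _ hstep hlim
    _ = ∑' i, b i + 2 * ∑' i, b (i + 1) := by rw [ENNReal.tsum_add, ENNReal.tsum_mul_left]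
    _ ≤ ∑' i, b i + 2 * ∑' i, b i := by
        gcongr ∑' i, b i + 2 * ?_
        exact ENNReal.tsum_comp_le_tsum_of_injective (add_left_injective 1) b
    _ = 3 * ∑' i, b i := by ring

end IsHajlaszGradientUpTo

variable {E : Type*} [NormedAddCommGroup E] [NormedSpace ℝ E] {x y z z' : E} {r t : ℝ}

/-- The ball of radius `t * r / 20` around the point that divides the segment from `y` to `x` in
the ratio `t`: for `t = (19 / 20) ^ i` these balls link `ball x (r / 20)` to `y`. -/
def chainBall (x y : E) (r t : ℝ) : Set E :=
  ball (AffineMap.lineMap y x t) (t * r / 20)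

lemma chainBall_one : chainBall x y r 1 = ball x (r / 20) := by
  simp [chainBall]

lemma chainBall_subset_ball (ht : 0 < t) (ht' : t ≤ 1) (hy : y ∈ ball x r) :
    chainBall x y r t ⊆ ball x r := by
  have hr : 0 < r := pos_of_mem_ball hy
  refine ball_subset_ball' ?_
  rw [dist_lineMap_right, Real.norm_of_nonneg (sub_nonneg.2 ht')]
  nlinarith [mem_ball.1 hy, mul_pos ht hr]

lemma chainBall_subset_ball_left (ht : 0 < t) (hy : y ∈ ball x r) :
    chainBall x y r t ⊆ ball y (2 * t * r) := by
  have hr : 0 < r := pos_of_mem_ball hy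
  refine ball_subset_ball' ?_
  rw [dist_lineMap_left, Real.norm_of_nonneg ht.le]
  nlinarith [mem_ball.1 hy, mul_pos ht hr]

lemma dist_le_of_mem_chainBall (ht : 0 < t) (hy : y ∈ ball x r) (hz : z ∈ chainBall x y r t)
    (hz' : z' ∈ chainBall x y r (19 / 20 * t)) : dist z z' ≤ 3 / 20 * (t * r) := by
  have hcentres : dist (AffineMap.lineMap y x t : E) (AffineMap.lineMap y x (19 / 20 * t)) ≤
      t * r / 20 := by
    rw [dist_lineMap_lineMap, Real.dist_eq, show t - 19 / 20 * t = t / 20 by ring,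
      abs_of_pos (by positivity)]
    nlinarith [mem_ball.1 hy]
  rw [chainBall, mem_ball] at hz hz'
  rw [dist_comm] at hz'
  have htriangle := dist_triangle4 z (AffineMap.lineMap y x t)
    (AffineMap.lineMap y x (19 / 20 * t)) z'
  linarith [mul_pos ht (pos_of_mem_ball hy)]

variable [FiniteDimensional ℝ E] [MeasurableSpace E] {μ : Measure E}
  [μ.IsAddHaarMeasure] {Y : Type*} [PseudoEMetricSpace Y] {f : E → Y} {g : E → ℝ≥0} {N : Set E}
  {α : ℝ}

lemma IsHajlaszGradientUpTo.exists_edist_le_tsum_powerMean_chainBall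
    (hfg : IsHajlaszGradientUpTo f g (ball x r \ N) (r / 4)) (hα : 0 < α) (hg : Measurable g)
    (hN : μ N = 0) :
    ∃ c : Y, ∀ y ∈ ball x r \ N, edist c (f y) ≤ 3 * ∑' i : ℕ,
      ENNReal.ofReal ((19 / 20) ^ i * r) * powerMean μ α g (chainBall x y r ((19 / 20) ^ i)) := by
  choose! ζ hζ hζ_le using fun (s : Set E) (hs : μ s ≠ 0 ∧ μ s ≠ ⊤) =>
    exists_mem_diff_null_le_powerMean (s := s) hα hg hN hs.1 hs.2
  refine ⟨f (ζ (ball x (r / 20))), fun y hy => ?_⟩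
  have hr : 0 < r := pos_of_mem_ball hy.1
  have ht : ∀ i : ℕ, 0 < (19 / 20 : ℝ) ^ i := fun i => by positivity
  have ht' : ∀ i : ℕ, (19 / 20 : ℝ) ^ i ≤ 1 := fun i => pow_le_one₀ (by norm_num) (by norm_num)
  have hball : ∀ i : ℕ, μ (chainBall x y r ((19 / 20) ^ i)) ≠ 0 ∧
      μ (chainBall x y r ((19 / 20) ^ i)) ≠ ⊤ := fun i =>
    ⟨(measure_ball_pos μ _ (by positivity)).ne', measure_ball_lt_top.ne⟩
  have hstep : ∀ i, dist (ζ (chainBall x y r ((19 / 20) ^ i)))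
      (ζ (chainBall x y r ((19 / 20) ^ (i + 1)))) ≤ 3 / 20 * ((19 / 20) ^ i * r) := fun i =>
    dist_le_of_mem_chainBall (ht i) hy.1 (hζ _ (hball i)).1
      (by simpa only [pow_succ'] using (hζ _ (hball (i + 1))).1)
  rw [← chainBall_one (y := y), ← pow_zero (19 / 20 : ℝ)]
  refine hfg.edist_le_tsum (Z := fun i => ζ (chainBall x y r ((19 / 20) ^ i))) (by positivity)
    (fun i => ⟨chainBall_subset_ball (ht i) (ht' i) hy.1 (hζ _ (hball i)).1, (hζ _ (hball i)).2⟩)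
    hy (fun i => (hstep i).trans ?_) (fun i => (hstep i).trans ?_) (fun i => ?_) (fun i => ?_) ?_
    fun i => hζ_le _ (hball i)
  · nlinarith [ht i, ht' i]
  · linarith [mul_pos (ht i) hr]
  · rw [← mul_assoc]
    exact (chainBall_subset_ball_left (ht i) hy.1 (hζ _ (hball i)).1).le
  · rw [pow_succ]
    linarith [mul_pos (ht i) hr]
  · simpa using (tendsto_pow_atTop_nhds_zero_of_lt_one (by norm_num : (0 : ℝ) ≤ 19 / 20)
      (by norm_num)).mul_const r

end Chain

section Poincare

variable {E : Type*} [NormedAddCommGroup E] [MeasurableSpace E] [BorelSpace E] {μ : Measure E}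
  [μ.IsAddHaarMeasure]

lemma lintegral_setLIntegral_inter_ball_le [SecondCountableTopology E] [SFinite μ]
    {G : E → ℝ≥0∞} (hG : Measurable G) (B : Set E) (R : ℝ) :
    ∫⁻ y in B, ∫⁻ z in ball y R ∩ B, G z ∂μ ∂μ ≤ μ (ball 0 R) * ∫⁻ z in B, G z ∂μ := by
  have hmeasurable : Measurable fun w : E × E => (ball w.1 R).indicator G w.2 :=
    (hG.comp measurable_snd).indicator (measurableSet_lt (by fun_prop) (by fun_prop))
  calc ∫⁻ y in B, ∫⁻ z in ball y R ∩ B, G z ∂μ ∂μ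
      = ∫⁻ y in B, ∫⁻ z in B, (ball y R).indicator G z ∂μ ∂μ := by
        simp only [lintegral_indicator measurableSet_ball,
          Measure.restrict_restrict measurableSet_ball]
    _ = ∫⁻ z in B, ∫⁻ y in B, (ball y R).indicator G z ∂μ ∂μ :=
        lintegral_lintegral_swap hmeasurable.aemeasurable
    _ = ∫⁻ z in B, ∫⁻ y in B, (ball z R).indicator (fun _ => G z) y ∂μ ∂μ := by
        simp only [indicator, mem_ball, dist_comm]
    _ ≤ ∫⁻ z in B, μ (ball 0 R) * G z ∂μ := by
        gcongr with z
        rw [lintegral_indicator_const measurableSet_ball, mul_comm,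
          ← Measure.addHaar_ball_center μ z]
        exact mul_le_mul_left (Measure.restrict_apply_le _ _) _
    _ = μ (ball 0 R) * ∫⁻ z in B, G z ∂μ := lintegral_const_mul _ hG

-- One factor `∫⁻ z in S y, G z` keeps track of the overlap of the sets `S y`, the other `q - 1` of
-- them are bounded by the integral over `B`.
lemma lintegral_setLIntegral_rpow_le [SecondCountableTopology E] [SFinite μ] {G : E → ℝ≥0∞}
    (hG : Measurable G) {B : Set E} (hB : MeasurableSet B) {S : E → Set E} {R q : ℝ}
    (hS : ∀ y ∈ B, S y ⊆ ball y R ∩ B) (hq : 1 ≤ q) :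
    ∫⁻ y in B, (∫⁻ z in S y, G z ∂μ) ^ q ∂μ ≤ μ (ball 0 R) * (∫⁻ z in B, G z ∂μ) ^ q := by
  have hsplit : ∀ c : ℝ≥0∞, c ^ q = c ^ (q - 1) * c := fun c => by
    simpa using ENNReal.rpow_add_of_nonneg (x := c) (q - 1) 1 (by linarith) zero_le_one
  have hmeasurable : Measurable fun y => ∫⁻ z in ball y R ∩ B, G z ∂μ := by
    simp only [← withDensity_apply _ (measurableSet_ball.inter hB),
      ← Measure.restrict_apply measurableSet_ball]
    exact (lowerSemicontinuous_measure_ball _ R).measurable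
  calc ∫⁻ y in B, (∫⁻ z in S y, G z ∂μ) ^ q ∂μ
      ≤ ∫⁻ y in B, (∫⁻ z in B, G z ∂μ) ^ (q - 1) * ∫⁻ z in ball y R ∩ B, G z ∂μ ∂μ := by
        refine setLIntegral_mono' hB fun y hy => ?_
        rw [hsplit]
        exact mul_le_mul' (ENNReal.rpow_le_rpow
          (lintegral_mono_set ((hS y hy).trans inter_subset_right)) (by linarith))
          (lintegral_mono_set (hS y hy))
    _ = (∫⁻ z in B, G z ∂μ) ^ (q - 1) * ∫⁻ y in B, ∫⁻ z in ball y R ∩ B, G z ∂μ ∂μ :=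
        lintegral_const_mul _ hmeasurable
    _ ≤ (∫⁻ z in B, G z ∂μ) ^ (q - 1) * (μ (ball 0 R) * ∫⁻ z in B, G z ∂μ) := by
        gcongr
        exact lintegral_setLIntegral_inter_ball_le hG B R
    _ = μ (ball 0 R) * (∫⁻ z in B, G z ∂μ) ^ q := by
        rw [hsplit]
        ring

variable [NormedSpace ℝ E] [FiniteDimensional ℝ E] {g : E → ℝ≥0} {x : E} {r t α : ℝ}

lemma powerMean_chainBall (y : E) (hα : 0 < α) (ht : 0 < t) :
    powerMean μ α g (chainBall x y r t) =
      (ENNReal.ofReal ((t / 20) ^ Module.finrank ℝ E) * μ (ball 0 r))⁻¹ ^ (1 / α) *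
        (∫⁻ z in chainBall x y r t, (g z : ℝ≥0∞) ^ α ∂μ) ^ (1 / α) := by
  rw [powerMean, setLAverage_eq, ENNReal.div_eq_inv_mul,
    ENNReal.mul_rpow_of_nonneg _ _ (one_div_nonneg.2 hα.le), chainBall, mul_div_right_comm,
    Measure.addHaar_ball_mul_of_pos μ _ (by positivity)]

lemma measurable_powerMean_chainBall (hα : 0 < α) (ht : 0 < t) :
    Measurable fun y => powerMean μ α g (chainBall x y r t) := by
  rw [funext fun y => powerMean_chainBall y hα ht]
  simp only [chainBall, ← withDensity_apply _ measurableSet_ball]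
  have hcentre : Continuous fun y : E => (AffineMap.lineMap y x t : E) := by
    simp only [AffineMap.lineMap_apply_module]
    fun_prop
  exact ((((lowerSemicontinuous_measure_ball _ _).comp hcentre).measurable).pow_const _).const_mul _

lemma setLAverage_powerMean_chainBall_le (hα : 0 < α) (hα' : α ≤ 1) (hg : Measurable g)
    (hr : 0 < r) (ht : 0 < t) (ht' : t ≤ 1) :
    ⨍⁻ y in ball x r, powerMean μ α g (chainBall x y r t) ∂μ ≤
      ENNReal.ofReal ((t / 20) ^ (-(Module.finrank ℝ E / α)) * (2 * t) ^ Module.finrank ℝ E) *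
        powerMean μ α g (ball x r) := by
  set d := Module.finrank ℝ E
  have hB : μ (ball (0 : E) r) ≠ 0 := (measure_ball_pos μ 0 hr).ne'
  have hB' : μ (ball (0 : E) r) ≠ ⊤ := measure_ball_lt_top.ne
  have hscale : (ENNReal.ofReal ((t / 20) ^ d))⁻¹ ^ (1 / α) =
      ENNReal.ofReal ((t / 20) ^ (-(d / α))) := by
    rw [← ENNReal.ofReal_inv_of_pos (by positivity),
      ENNReal.ofReal_rpow_of_nonneg (by positivity) (by positivity), ← Real.rpow_natCast,
      ← Real.rpow_neg (by positivity), ← Real.rpow_mul (by positivity)]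
    congr 2
    ring
  have hoverlap := lintegral_setLIntegral_rpow_le (μ := μ) (G := fun z => (g z : ℝ≥0∞) ^ α)
    (S := fun y => chainBall x y r t) (R := 2 * t * r) (by fun_prop) (measurableSet_ball (x := x))
    (fun y hy => subset_inter (chainBall_subset_ball_left ht hy) (chainBall_subset_ball ht ht' hy))
    (one_le_one_div hα hα')
  rw [Measure.addHaar_ball_mul_of_pos μ _ (by positivity)] at hoverlap
  change _ ≤ ENNReal.ofReal ((2 * t) ^ d) * _ * _ at hoverlap
  have hconst : (ENNReal.ofReal ((t / 20) ^ d) * μ (ball 0 r))⁻¹ ^ (1 / α) ≠ ⊤ := by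
    refine ENNReal.rpow_ne_top_of_nonneg (by positivity) (ENNReal.inv_ne_top.2 ?_)
    exact mul_ne_zero (ENNReal.ofReal_pos.2 (by positivity)).ne' hB
  rw [setLAverage_eq, lintegral_congr fun y => powerMean_chainBall y hα ht, powerMean,
    setLAverage_eq, lintegral_const_mul' _ _ hconst]
  simp only [Measure.addHaar_ball_center]
  refine (ENNReal.div_le_div_right (mul_le_mul_right hoverlap _) _).trans_eq ?_
  rw [ENNReal.mul_inv (.inr hB') (.inr hB), ENNReal.mul_rpow_of_nonneg _ _ (by positivity), hscale,
    ENNReal.ofReal_mul (by positivity), ENNReal.div_eq_inv_mul, ENNReal.div_eq_inv_mul,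
    ENNReal.mul_rpow_of_nonneg _ _ (by positivity)]
  conv_rhs => rw [← one_mul (_ * _), ← ENNReal.inv_mul_cancel hB hB']
  ring

lemma tsum_chain_ne_top {d : ℕ} (hα : (d : ℝ) / (d + 1) < α) (hα₀ : 0 < α) :
    ∑' i : ℕ, ENNReal.ofReal ((19 / 20) ^ i) *
      ENNReal.ofReal (((19 / 20) ^ i / 20) ^ (-(d / α)) * (2 * (19 / 20) ^ i) ^ d) ≠ ⊤ := by
  have hexponent : 0 < 1 + d - d / α := by
    have hd : (d : ℝ) / α < d + 1 := by
      rw [div_lt_iff₀ (by positivity)] at hα ⊢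
      linarith
    linarith
  set θ : ℝ := (19 / 20) ^ (1 + d - d / α)
  have hterm : ∀ i : ℕ, ENNReal.ofReal ((19 / 20) ^ i) *
      ENNReal.ofReal (((19 / 20) ^ i / 20) ^ (-(d / α)) * (2 * (19 / 20) ^ i) ^ d) =
        ENNReal.ofReal (20 ^ (d / α) * 2 ^ d) * ENNReal.ofReal θ ^ i := fun i => by
    rw [← ENNReal.ofReal_mul (by positivity), ← ENNReal.ofReal_pow (by positivity),
      ← ENNReal.ofReal_mul (by positivity), Real.div_rpow (by positivity) (by positivity),
      Real.rpow_neg (x := 20) (by positivity), div_inv_eq_mul, mul_pow, ← Real.rpow_natCast θ,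
      ← Real.rpow_mul (by norm_num), mul_comm _ (i : ℝ), Real.rpow_mul (by norm_num),
      Real.rpow_natCast, sub_eq_add_neg, Real.rpow_add (by positivity),
      Real.rpow_add (by positivity), Real.rpow_one, Real.rpow_natCast]
    ring_nf
  simp only [hterm, ENNReal.tsum_mul_left, ENNReal.tsum_geometric]
  refine ENNReal.mul_ne_top ENNReal.ofReal_ne_top (ENNReal.inv_ne_top.2 (tsub_pos_of_lt ?_).ne')
  rw [ENNReal.ofReal_lt_one]
  exact Real.rpow_lt_one (by norm_num) (by norm_num) hexponent

lemma exists_poincare_of_isHajlaszGradientUpTo {Y : Type*} [PseudoEMetricSpace Y]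
    (μ : Measure E) [μ.IsAddHaarMeasure]
    (hα : (Module.finrank ℝ E : ℝ) / (Module.finrank ℝ E + 1) < α) (hα' : α ≤ 1) :
    ∃ K : ℝ≥0∞, K ≠ ⊤ ∧ ∀ (x : E) (r : ℝ) (f : E → Y) (g : E → ℝ≥0) (N : Set E), 0 < r →
      Measurable g → μ N = 0 → IsHajlaszGradientUpTo f g (ball x r \ N) (r / 4) →
        ∃ c, ⨍⁻ y in ball x r, edist c (f y) ∂μ ≤
          K * ENNReal.ofReal r * powerMean μ α g (ball x r) := by
  have hα₀ : 0 < α := lt_of_le_of_lt (by positivity) hα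
  set d := Module.finrank ℝ E
  set κ : ℕ → ℝ≥0∞ := fun i =>
    ENNReal.ofReal (((19 / 20) ^ i / 20) ^ (-(d / α)) * (2 * (19 / 20) ^ i) ^ d)
  refine ⟨3 * ∑' i : ℕ, ENNReal.ofReal ((19 / 20) ^ i) * κ i,
    ENNReal.mul_ne_top (by simp) (tsum_chain_ne_top hα hα₀), fun x r f g N hr hg hN hfg => ?_⟩
  obtain ⟨c, hc⟩ := hfg.exists_edist_le_tsum_powerMean_chainBall hα₀ hg hN
  refine ⟨c, ?_⟩
  have hae : ∀ᵐ y ∂μ.restrict (ball x r), edist c (f y) ≤ 3 * ∑' i : ℕ,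
      ENNReal.ofReal ((19 / 20) ^ i * r) * powerMean μ α g (chainBall x y r ((19 / 20) ^ i)) := by
    filter_upwards [ae_restrict_mem measurableSet_ball,
      ae_restrict_of_ae (measure_eq_zero_iff_ae_notMem.1 hN)] with y hy hyN using hc y ⟨hy, hyN⟩
  have hmeasurable : ∀ i : ℕ, Measurable fun y => ENNReal.ofReal ((19 / 20) ^ i * r) *
      powerMean μ α g (chainBall x y r ((19 / 20) ^ i)) := fun i =>
    (measurable_powerMean_chainBall hα₀ (by positivity)).const_mul _
  calc ⨍⁻ y in ball x r, edist c (f y) ∂μ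
      ≤ ⨍⁻ y in ball x r, 3 * ∑' i : ℕ, ENNReal.ofReal ((19 / 20) ^ i * r) *
          powerMean μ α g (chainBall x y r ((19 / 20) ^ i)) ∂μ := laverage_mono_ae hae
    _ = 3 * ∑' i : ℕ, ENNReal.ofReal ((19 / 20) ^ i * r) *
          ⨍⁻ y in ball x r, powerMean μ α g (chainBall x y r ((19 / 20) ^ i)) ∂μ := by
        simp only [laverage]
        rw [lintegral_const_mul' _ _ (by simp),
          lintegral_tsum fun i => (hmeasurable i).aemeasurable]
        simp only [lintegral_const_mul' _ _ ENNReal.ofReal_ne_top]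
    _ ≤ 3 * ∑' i : ℕ, ENNReal.ofReal ((19 / 20) ^ i * r) * (κ i * powerMean μ α g (ball x r)) := by
        gcongr with i
        exact setLAverage_powerMean_chainBall_le hα₀ hα' hg hr (by positivity)
          (pow_le_one₀ (by norm_num) (by norm_num))
    _ = 3 * (∑' i : ℕ, ENNReal.ofReal ((19 / 20) ^ i) * κ i) * ENNReal.ofReal r *
          powerMean μ α g (ball x r) := by
        rw [mul_assoc, mul_assoc, ← ENNReal.tsum_mul_right]
        congr 2 with i
        rw [ENNReal.ofReal_mul (by positivity)]
        ring

end Poincare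

lemma ball_infDist_frontier_subset {E : Type*} [NormedAddCommGroup E] [NormedSpace ℝ E]
    {Ω : Set E} (hΩ : IsOpen Ω) {x : E} (hx : x ∈ Ω) : ball x (infDist x (frontier Ω)) ⊆ Ω := by
  rcases (ball x (infDist x (frontier Ω))).eq_empty_or_nonempty with hempty | hball
  · simp [hempty]
  refine IsPreconnected.subset_left_of_subset_union hΩ isClosed_closure.isOpen_compl
    (disjoint_compl_right_iff_subset.2 subset_closure) (fun y hy => ?_)
    ⟨x, mem_ball_self (nonempty_ball.1 hball), hx⟩ (convex_ball x _).isPreconnected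
  have hy' : y ∉ frontier Ω := disjoint_left.1 disjoint_ball_infDist hy
  rw [hΩ.frontier_eq, mem_sdiff, not_and_not_right] at hy'
  exact or_iff_not_imp_right.2 fun hyc => hy' (not_not.1 hyc)

section TestFunctions

variable {n : ℕ} {φ : EuclideanSpace ℝ (Fin n) → ℝ} {x c z : EuclideanSpace ℝ (Fin n)}
  {s t a : ℝ} {j : Fin n}

lemma pderivIdx_const_mul (hφ : DifferentiableAt ℝ φ z) :
    pderivIdx n j (fun w => a * φ w) z = a * pderivIdx n j φ z := by
  simp [pderivIdx, fderiv_const_mul hφ]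

lemma abs_pderivIdx_le : |pderivIdx n j φ z| ≤ ‖fderiv ℝ φ z‖ := by
  simpa [pderivIdx] using (fderiv ℝ φ z).le_opNorm (EuclideanSpace.single j 1)

lemma continuous_pderivIdx (hφ : ContDiff ℝ 1 φ) : Continuous (pderivIdx n j φ) :=
  (hφ.continuous_fderiv one_ne_zero).clm_apply continuous_const

lemma pderivIdx_eq_zero_of_notMem_tsupport (hz : z ∉ tsupport φ) : pderivIdx n j φ z = 0 := by
  simp [pderivIdx, Function.notMem_support.1 fun h => hz (support_fderiv_subset ℝ h)]

lemma integrable_pderivIdx (hφ : ContDiff ℝ 1 φ) (hc : HasCompactSupport φ) :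
    Integrable (pderivIdx n j φ) :=
  (continuous_pderivIdx hφ).integrable_of_hasCompactSupport
    (hc.fderiv_apply (𝕜 := ℝ) (EuclideanSpace.single j 1))

lemma integral_pderivIdx (hφ : ContDiff ℝ 1 φ) (hc : HasCompactSupport φ) :
    ∫ z, pderivIdx n j φ z = 0 := by
  simpa [pderivIdx] using integral_mul_fderiv_eq_neg_fderiv_mul_of_integrable (μ := volume)
    (f := fun _ : EuclideanSpace ℝ (Fin n) => (1 : ℝ)) (g := φ) (v := EuclideanSpace.single j 1)
    (by simp) (by simpa only [one_mul] using! integrable_pderivIdx hφ hc)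
    (by simpa using hφ.continuous.integrable_of_hasCompactSupport hc) (by simp)
    fun z _ => hφ.differentiable one_ne_zero z

namespace memTestClassOne

lemma contDiff (hφ : memTestClassOne n x s φ) (m : ℕ∞) : ContDiff ℝ m φ :=
  hφ.1.of_le (by exact_mod_cast le_top)

lemma differentiable (hφ : memTestClassOne n x s φ) : Differentiable ℝ φ :=
  (hφ.contDiff 1).differentiable one_ne_zero

lemma hasCompactSupport (hφ : memTestClassOne n x s φ) : HasCompactSupport φ :=
  (isCompact_closedBall x s).of_isClosed_subset (isClosed_tsupport φ)
    (hφ.2.1.trans ball_subset_closedBall)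

lemma eq_zero_of_notMem_ball (hφ : memTestClassOne n x s φ) (hz : z ∉ ball x s) : φ z = 0 :=
  image_eq_zero_of_notMem_tsupport fun h => hz (hφ.2.1 h)

lemma pderivIdx_eq_zero_of_notMem_ball (hφ : memTestClassOne n x s φ) (hz : z ∉ ball x s) :
    pderivIdx n j φ z = 0 :=
  pderivIdx_eq_zero_of_notMem_tsupport fun h => hz (hφ.2.1 h)

end memTestClassOne

lemma exists_memTestClassOne_integral_pos (n : ℕ) :
    ∃ ψ : EuclideanSpace ℝ (Fin n) → ℝ, memTestClassOne n 0 1 ψ ∧ 0 < ∫ z, ψ z := by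
  let b : ContDiffBump (0 : EuclideanSpace ℝ (Fin n)) := ⟨1 / 4, 1 / 2, by norm_num, by norm_num⟩
  have hb : ContDiff ℝ (⊤ : ℕ∞) b := b.contDiff
  obtain ⟨B, hB⟩ := (hb.continuous_fderiv (by simp)).bounded_above_of_compact_support
    (b.hasCompactSupport.fderiv (𝕜 := ℝ))
  have hB₀ : 0 ≤ B := (norm_nonneg _).trans (hB 0)
  refine ⟨fun z => (1 + B)⁻¹ * b z, ⟨contDiff_const.mul hb, ?_, fun z => ?_, fun j z => ?_⟩, ?_⟩
  · refine tsupport_mul_subset_right.trans ?_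
    rw [b.tsupport_eq]
    exact closedBall_subset_ball (by norm_num)
  · rw [abs_mul, abs_of_nonneg b.nonneg, abs_of_pos (by positivity), inv_one, one_pow,
      inv_mul_le_iff₀ (by positivity)]
    linarith [b.le_one (x := z)]
  · rw [pderivIdx_const_mul (hb.differentiable (by simp) z), abs_mul, abs_of_pos (by positivity),
      inv_one, one_pow, inv_mul_le_iff₀ (by positivity)]
    linarith [(abs_pderivIdx_le (j := j)).trans (hB z)]
  · rw [integral_const_mul]
    have := b.integral_pos (μ := volume)
    positivity

/-- The `L¹`-normalized dilate of `φ` by the factor `t`, translated by `x`. -/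
def dilate (x : EuclideanSpace ℝ (Fin n)) (t : ℝ) (φ : EuclideanSpace ℝ (Fin n) → ℝ)
    (z : EuclideanSpace ℝ (Fin n)) : ℝ :=
  t⁻¹ ^ n * φ (t⁻¹ • (z - x))

lemma dilate_dilate (ht : t ≠ 0) :
    dilate x t (dilate c s φ) = dilate (x + t • c) (t * s) φ := by
  ext z
  have harg : s⁻¹ • (t⁻¹ • (z - x) - c) = (t * s)⁻¹ • (z - (x + t • c)) := by
    rw [← sub_sub, smul_sub _ (z - x), smul_sub, smul_smul, smul_smul, mul_inv_rev, mul_assoc,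
      inv_mul_cancel₀ ht, mul_one]
  simp only [dilate, harg]
  rw [← mul_assoc, ← mul_pow, mul_inv]

lemma integral_dilate (ht : 0 < t) : ∫ z, dilate x t φ z = ∫ z, φ z := by
  simp only [dilate]
  rw [integral_const_mul, integral_sub_right_eq_self (fun z => φ (t⁻¹ • z)) x,
    Measure.integral_comp_smul, finrank_euclideanSpace_fin, abs_of_pos (by positivity),
    smul_eq_mul, mul_inv_cancel_left₀ (by positivity)]

lemma pderivIdx_dilate (hφ : Differentiable ℝ φ) :
    pderivIdx n j (dilate x t φ) z = t⁻¹ ^ (n + 1) * pderivIdx n j φ (t⁻¹ • (z - x)) := by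
  have harg : HasFDerivAt (fun w => t⁻¹ • (w - x))
      (t⁻¹ • ContinuousLinearMap.id ℝ (EuclideanSpace ℝ (Fin n))) z :=
    ((hasFDerivAt_id z).sub_const x).const_smul t⁻¹
  have hcomp : HasFDerivAt (dilate x t φ) _ z :=
    ((hφ _).hasFDerivAt.comp z harg).const_mul (t⁻¹ ^ n)
  simp only [pderivIdx, hcomp.fderiv, smul_apply, ContinuousLinearMap.comp_apply,
    ContinuousLinearMap.id_apply, map_smul, smul_eq_mul]
  ring

lemma tsupport_dilate_subset (ht : 0 < t) (hφ : tsupport φ ⊆ ball c s) :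
    tsupport (dilate x t φ) ⊆ ball (x + t • c) (t * s) := by
  have hpreimage : tsupport (dilate x t φ) ⊆ (fun z => t⁻¹ • (z - x)) ⁻¹' tsupport φ :=
    closure_minimal (fun z hz => subset_tsupport φ (right_ne_zero_of_mul hz))
      ((isClosed_tsupport φ).preimage (by fun_prop))
  intro z hz
  have hz' : dist (t⁻¹ • (z - x)) c < s := hφ (hpreimage hz)
  rw [mem_ball, ← div_lt_iff₀' ht]
  rwa [← inv_smul_smul₀ ht.ne' c, dist_smul₀, Real.norm_of_nonneg (by positivity), dist_eq_norm,
    sub_sub, ← dist_eq_norm, inv_mul_eq_div] at hz'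

lemma memTestClassOne.dilate (hφ : memTestClassOne n c s φ) (ht : 0 < t) :
    memTestClassOne n (x + t • c) (t * s) (dilate x t φ) := by
  refine ⟨?_, tsupport_dilate_subset ht hφ.2.1, fun z => ?_, fun j z => ?_⟩
  · have := hφ.1
    unfold _root_.dilate
    fun_prop
  · rw [_root_.dilate, abs_mul, abs_of_pos (by positivity), mul_inv, mul_pow]
    gcongr
    exact hφ.2.2.1 _
  · rw [pderivIdx_dilate hφ.differentiable, abs_mul, abs_of_pos (by positivity), mul_inv, mul_pow]
    gcongr
    exact hφ.2.2.2 j _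

/-- The function `φ` multiplied by the `j`-th coordinate. These are the components of the vector
field whose divergence is the derivative of the dilates of `φ` in the scale. -/
def coordMul (j : Fin n) (φ : EuclideanSpace ℝ (Fin n) → ℝ) (w : EuclideanSpace ℝ (Fin n)) : ℝ :=
  w j * φ w

lemma pderivIdx_coordMul {i : Fin n} (hφ : DifferentiableAt ℝ φ z) :
    pderivIdx n i (coordMul j φ) z = (if i = j then φ z else 0) + z j * pderivIdx n i φ z := by
  have hprod : HasFDerivAt (coordMul j φ) _ z :=
    (EuclideanSpace.proj j : EuclideanSpace ℝ (Fin n) →L[ℝ] ℝ).hasFDerivAt.mul hφ.hasFDerivAt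
  rw [pderivIdx, hprod.fderiv]
  simp [PiLp.single_apply, pderivIdx, eq_comm, add_comm]

lemma sum_pderivIdx_coordMul (hφ : DifferentiableAt ℝ φ z) :
    ∑ j, pderivIdx n j (coordMul j φ) z = n * φ z + fderiv ℝ φ z z := by
  have hcoord : fderiv ℝ φ z z = ∑ j, z j * pderivIdx n j φ z := by
    conv_lhs => enter [2]; rw [← (EuclideanSpace.basisFun (Fin n) ℝ).sum_repr z]
    simp [pderivIdx]
  simp [pderivIdx_coordMul hφ, Finset.sum_add_distrib, hcoord]

lemma hasDerivAt_dilate (hφ : Differentiable ℝ φ) (ht : t ≠ 0) :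
    HasDerivAt (fun t => dilate x t φ z) (-∑ j, pderivIdx n j (dilate x t (coordMul j φ)) z) t := by
  have hpow : HasDerivAt (fun t : ℝ => t⁻¹ ^ n) (-(n * t⁻¹ ^ (n + 1))) t := by
    refine ((hasDerivAt_inv ht).fun_pow n).congr_deriv ?_
    cases n <;> simp [pow_succ, mul_assoc]
  have harg : HasDerivAt (fun t : ℝ => t⁻¹ • (z - x)) (-(t ^ 2)⁻¹ • (z - x)) t :=
    (hasDerivAt_inv ht).smul_const _
  have hcoordMul : ∀ j, Differentiable ℝ (coordMul j φ) := fun j => by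
    unfold coordMul
    fun_prop
  refine (hpow.mul ((hφ (t⁻¹ • (z - x))).hasFDerivAt.comp_hasDerivAt t harg)).congr_deriv ?_
  simp only [pderivIdx_dilate (hcoordMul _), ← Finset.mul_sum, sum_pderivIdx_coordMul (hφ _),
    map_smul, smul_eq_mul, Function.comp_apply]
  ring

lemma abs_coordMul_le {A : ℝ} (hφ : ∀ w, |φ w| ≤ A) (hsupp : ∀ w ∉ ball 0 1, φ w = 0)
    (j : Fin n) (w : EuclideanSpace ℝ (Fin n)) : |coordMul j φ w| ≤ A := by
  by_cases hw : w ∈ ball 0 1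
  · rw [coordMul, abs_mul]
    have hcoord : |w j| ≤ 1 := (PiLp.norm_apply_le w j).trans (mem_ball_zero_iff.1 hw).le
    exact (mul_le_of_le_one_left (abs_nonneg _) hcoord).trans (hφ w)
  · simpa [coordMul, hsupp w hw] using (abs_nonneg _).trans (hφ w)

lemma memTestClassOne.coordMul (hφ : memTestClassOne n c s φ) (hs : 0 < s)
    (hball : ball c s ⊆ ball 0 1) (j : Fin n) :
    memTestClassOne n 0 1 fun w => (s⁻¹ ^ n + s⁻¹ ^ (n + 1))⁻¹ * coordMul j φ w := by
  have hsmooth : ContDiff ℝ (⊤ : ℕ∞) (_root_.coordMul j φ) := by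
    have := hφ.1
    unfold _root_.coordMul
    fun_prop
  have hbound := abs_coordMul_le hφ.2.2.1
    (fun w hw => hφ.eq_zero_of_notMem_ball fun h => hw (hball h)) j
  have hbound' : ∀ i, _ := fun i => abs_coordMul_le (hφ.2.2.2 i)
    (fun w hw => hφ.pderivIdx_eq_zero_of_notMem_ball fun h => hw (hball h)) j
  refine ⟨contDiff_const.mul hsmooth, ?_, fun w => ?_, fun i w => ?_⟩
  · exact tsupport_mul_subset_right.trans (tsupport_mul_subset_right.trans (hφ.2.1.trans hball))
  · rw [abs_mul, abs_of_pos (by positivity), inv_one, one_pow, inv_mul_le_iff₀ (by positivity),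
      mul_one]
    exact (hbound w).trans (le_add_of_nonneg_right (by positivity))
  · rw [pderivIdx_const_mul (hsmooth.differentiable (by simp) w), abs_mul,
      abs_of_pos (by positivity), inv_one, one_pow, inv_mul_le_iff₀ (by positivity), mul_one,
      pderivIdx_coordMul (hφ.differentiable w)]
    refine (abs_add_le _ _).trans (add_le_add ?_ (hbound' i w))
    split_ifs
    · exact hφ.2.2.1 w
    · simpa using by positivity

end TestFunctions

section MaximalFunctionBound

variable {n : ℕ} {Ω : Set (EuclideanSpace ℝ (Fin n))} {f φ g : EuclideanSpace ℝ (Fin n) → ℝ}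
  {x : EuclideanSpace ℝ (Fin n)} {r p : ℝ}

lemma integral_sub_const_mul_pderivIdx (hφ : ContDiff ℝ 1 φ) (hc : HasCompactSupport φ)
    (j : Fin n) (b : ℝ) :
    ∫ z, (f z - b) * pderivIdx n j φ z = ∫ z, f z * pderivIdx n j φ z := by
  have hint : Integrable fun z => b * pderivIdx n j φ z := (integrable_pderivIdx hφ hc).const_mul b
  by_cases hf : Integrable fun z => f z * pderivIdx n j φ z
  · simp only [sub_mul]
    rw [integral_sub hf hint, integral_const_mul, integral_pderivIdx hφ hc, mul_zero, sub_zero]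
  · rw [integral_undef hf, integral_undef]
    refine fun h => hf ((h.add hint).congr (.of_forall fun z => ?_))
    simp only [Pi.add_apply]
    ring

lemma memTestClassOne.enorm_pderivIdx_le (hφ : memTestClassOne n x r φ) (hr : 0 < r) (j : Fin n)
    (z : EuclideanSpace ℝ (Fin n)) : ‖pderivIdx n j φ z‖ₑ ≤ (ENNReal.ofReal r)⁻¹ ^ (n + 1) := by
  rw [← ofReal_norm, Real.norm_eq_abs, ← ENNReal.ofReal_inv_of_pos hr,
    ← ENNReal.ofReal_pow (by positivity)]
  exact ENNReal.ofReal_le_ofReal (hφ.2.2.2 j z)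

lemma memTestClassOne.abs_setIntegral_mul_pderivIdx_le_setLAverage
    (hφ : memTestClassOne n x r φ) (hr : 0 < r) (hball : ball x r ⊆ Ω) (j : Fin n) (b : ℝ) :
    ENNReal.ofReal |∫ y in Ω, f y * pderivIdx n j φ y| ≤
      volume (ball (0 : EuclideanSpace ℝ (Fin n)) 1) * (ENNReal.ofReal r)⁻¹ *
        ⨍⁻ y in ball x r, edist b (f y) ∂volume := by
  have hzero : ∀ y ∉ ball x r, pderivIdx n j φ y = 0 :=
    fun y hy => hφ.pderivIdx_eq_zero_of_notMem_ball hy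
  have hr₀ : ENNReal.ofReal r ≠ 0 := by simp [hr]
  calc ENNReal.ofReal |∫ y in Ω, f y * pderivIdx n j φ y|
      = ‖∫ y in ball x r, (f y - b) * pderivIdx n j φ y‖ₑ := by
        rw [setIntegral_eq_integral_of_forall_compl_eq_zero fun y hy => by
            rw [hzero y fun h => hy (hball h), mul_zero],
          setIntegral_eq_integral_of_forall_compl_eq_zero fun y hy => by
            rw [hzero y hy, mul_zero],
          integral_sub_const_mul_pderivIdx (hφ.contDiff 1) hφ.hasCompactSupport,
          ← Real.norm_eq_abs, ofReal_norm]
    _ ≤ ∫⁻ y in ball x r, (ENNReal.ofReal r)⁻¹ ^ (n + 1) * edist b (f y) := by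
        refine (enorm_integral_le_lintegral_enorm _).trans (lintegral_mono fun y => ?_)
        rw [enorm_mul, mul_comm, edist_comm, edist_eq_enorm_sub]
        exact mul_le_mul_left (hφ.enorm_pderivIdx_le hr j y) _
    _ = (ENNReal.ofReal r)⁻¹ ^ (n + 1) * (ENNReal.ofReal r ^ n *
          volume (ball (0 : EuclideanSpace ℝ (Fin n)) 1) *
            ⨍⁻ y in ball x r, edist b (f y) ∂volume) := by
        rw [lintegral_const_mul' _ _ (by simp [hr]),
          ← measure_mul_setLAverage _ measure_ball_ne_top, Measure.addHaar_ball_of_pos _ _ hr,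
          finrank_euclideanSpace_fin, ENNReal.ofReal_pow hr.le]
    _ = (ENNReal.ofReal r)⁻¹ ^ n * ENNReal.ofReal r ^ n *
          (volume (ball (0 : EuclideanSpace ℝ (Fin n)) 1) * (ENNReal.ofReal r)⁻¹ *
            ⨍⁻ y in ball x r, edist b (f y) ∂volume) := by ring
    _ = _ := by
        rw [← mul_pow, ENNReal.inv_mul_cancel hr₀ ENNReal.ofReal_ne_top, one_pow, one_mul]

lemma IsBallHajlaszGradientOn.exists_isHajlaszGradientUpTo (hΩ : IsOpen Ω)
    (hg : IsBallHajlaszGradientOn n f g Ω) :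
    ∃ N, volume N = 0 ∧ ∀ x ∈ Ω, ∀ r ≤ infDist x (frontier Ω) / 2,
      IsHajlaszGradientUpTo f (fun z => (g z).toNNReal) (ball x r \ N) (r / 4) := by
  obtain ⟨-, hg₀, N, hN, hHajlasz⟩ := hg
  refine ⟨N, hN, fun x hx r hr y hy z hz hyz => ?_⟩
  have hx₀ : 0 ≤ infDist x (frontier Ω) := infDist_nonneg
  have hball : ball x r ⊆ Ω :=
    (ball_subset_ball (by linarith)).trans (ball_infDist_frontier_subset hΩ hx)
  have hdist : ∀ u ∈ ball x r, r ≤ infDist u (frontier Ω) := fun u hu => by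
    have := infDist_le_infDist_add_dist (s := frontier Ω) (x := x) (y := u)
    linarith [mem_ball'.1 hu]
  rw [edist_dist, edist_dist, Real.dist_eq, dist_eq_norm]
  change _ ≤ _ * (ENNReal.ofReal (g y) + ENNReal.ofReal (g z))
  rw [← ENNReal.ofReal_add (hg₀ y) (hg₀ z), ← ENNReal.ofReal_mul (norm_nonneg _)]
  refine ENNReal.ofReal_le_ofReal (hHajlasz y ⟨hball hy.1, hy.2⟩ z ⟨hball hz.1, hz.2⟩ ?_)
  rw [dist_eq_norm] at hyz
  linarith [le_min (hdist y hy.1) (hdist z hz.1)]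

lemma exists_miyachiMax_le_hardyLittlewoodMaximal {α : ℝ} (hα : (n : ℝ) / (n + 1) < α)
    (hα' : α ≤ 1) :
    ∃ K : ℝ≥0∞, K ≠ ⊤ ∧ ∀ (Ω : Set (EuclideanSpace ℝ (Fin n))) (f g : _ → ℝ), IsOpen Ω →
      IsBallHajlaszGradientOn n f g Ω → ∀ x ∈ Ω, miyachiMax n Ω f x ≤
        K * hardyLittlewoodMaximal volume (Ω.indicator fun z => ENNReal.ofReal (g z) ^ α) x ^
          (1 / α) := by
  obtain ⟨K, hK, hPoincare⟩ := exists_poincare_of_isHajlaszGradientUpTo (Y := ℝ)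
    (volume : Measure (EuclideanSpace ℝ (Fin n))) (by rwa [finrank_euclideanSpace_fin]) hα'
  refine ⟨volume (ball (0 : EuclideanSpace ℝ (Fin n)) 1) * K,
    ENNReal.mul_ne_top measure_ball_ne_top hK, fun Ω f g hΩ hg x hx => ?_⟩
  refine iSup_le fun j => iSup_le fun ⟨r, hr, hrΩ⟩ => iSup_le fun ⟨φ, hφ⟩ => ?_
  obtain ⟨N, hN, hHajlasz⟩ := hg.exists_isHajlaszGradientUpTo hΩ
  obtain ⟨b, hb⟩ := hPoincare x r f _ N hr hg.1.real_toNNReal hN (hHajlasz x hx r hrΩ)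
  have hball : ball x r ⊆ Ω :=
    (ball_subset_ball (by linarith)).trans (ball_infDist_frontier_subset hΩ hx)
  have hr₀ : ENNReal.ofReal r ≠ 0 := by simp [hr]
  have hα₀ : 0 < α := lt_of_le_of_lt (by positivity) hα
  have hmean : powerMean volume α (fun z => (g z).toNNReal) (ball x r) ≤
      hardyLittlewoodMaximal volume (Ω.indicator fun z => ENNReal.ofReal (g z) ^ α) x ^
        (1 / α) := by
    refine ENNReal.rpow_le_rpow (le_trans (le_of_eq ?_)
      (setLAverage_ball_le_hardyLittlewoodMaximal hr)) (by positivity)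
    exact setLAverage_congr_fun measurableSet_ball fun z hz => by
      rw [indicator_of_mem (hball hz)]; rfl
  calc ENNReal.ofReal |∫ y in Ω, f y * pderivIdx n j φ y|
      ≤ volume (ball (0 : EuclideanSpace ℝ (Fin n)) 1) * (ENNReal.ofReal r)⁻¹ *
          (K * ENNReal.ofReal r * powerMean volume α (fun z => (g z).toNNReal) (ball x r)) :=
        (hφ.abs_setIntegral_mul_pderivIdx_le_setLAverage hr hball j b).trans
          (mul_le_mul_right hb _)
    _ = (ENNReal.ofReal r)⁻¹ * ENNReal.ofReal r *
          (volume (ball (0 : EuclideanSpace ℝ (Fin n)) 1) * K *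
            powerMean volume α (fun z => (g z).toNNReal) (ball x r)) := by ring
    _ ≤ _ := by
        rw [ENNReal.inv_mul_cancel hr₀ ENNReal.ofReal_ne_top, one_mul]
        exact mul_le_mul_right hmean _

lemma lintegral_indicator_ofReal_rpow_rpow_div {α : ℝ} (hα : 0 < α) (hp : 0 < p)
    (hΩ : MeasurableSet Ω) (hg : ∀ x, 0 ≤ g x) :
    ∫⁻ x, Ω.indicator (fun z => ENNReal.ofReal (g z) ^ α) x ^ (p / α) =
      ∫⁻ x in Ω, ENNReal.ofReal |g x| ^ p := by
  rw [← lintegral_indicator hΩ]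
  refine lintegral_congr fun x => ?_
  by_cases hx : x ∈ Ω
  · rw [indicator_of_mem hx, indicator_of_mem hx, ← ENNReal.rpow_mul, mul_div_cancel₀ _ hα.ne',
      abs_of_nonneg (hg x)]
  · rw [indicator_of_notMem hx, indicator_of_notMem hx, ENNReal.zero_rpow_of_pos (by positivity)]

lemma exists_lintegral_miyachiMax_rpow_le (hn : 1 ≤ n) (hp : (n : ℝ) / (n + 1) < p) :
    ∃ C : ℝ≥0∞, C ≠ ⊤ ∧ ∀ (Ω : Set (EuclideanSpace ℝ (Fin n))) (f g : _ → ℝ), IsOpen Ω →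
      IsBallHajlaszGradientOn n f g Ω →
        (∫⁻ x in Ω, miyachiMax n Ω f x ^ p) ^ (1 / p) ≤
          C * _root_.lpNorm n p g (volume.restrict Ω) := by
  have : Nonempty (Fin n) := ⟨⟨0, hn⟩⟩
  obtain ⟨α, hα, hα'⟩ := exists_between
    (lt_min hp ((div_lt_one (by positivity)).2 (lt_add_one (n : ℝ))))
  have hα₀ : 0 < α := lt_of_le_of_lt (by positivity) hα
  have hp₀ : 0 < p := lt_of_le_of_lt (by positivity) hp
  have hq : 1 < p / α := (one_lt_div hα₀).2 (lt_min_iff.1 hα').1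
  obtain ⟨K, hK, hmax⟩ := exists_miyachiMax_le_hardyLittlewoodMaximal hα (lt_min_iff.1 hα').2.le
  obtain ⟨A, hA, hHL⟩ : ∃ A : ℝ≥0∞, A ≠ ⊤ ∧ ∀ h : EuclideanSpace ℝ (Fin n) → ℝ≥0∞,
      Measurable h → ∫⁻ x, hardyLittlewoodMaximal volume h x ^ (p / α) ≤
        A * ∫⁻ x, h x ^ (p / α) :=
    ⟨_, by finiteness, fun h hh => lintegral_hardyLittlewoodMaximal_rpow_le hq hh⟩
  refine ⟨K * A ^ (1 / p), by finiteness, fun Ω f g hΩ hg => ?_⟩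
  set h : EuclideanSpace ℝ (Fin n) → ℝ≥0∞ := Ω.indicator fun z => ENNReal.ofReal (g z) ^ α
  have hh : Measurable h := (hg.1.ennreal_ofReal.pow_const α).indicator hΩ.measurableSet
  calc (∫⁻ x in Ω, miyachiMax n Ω f x ^ p) ^ (1 / p)
      ≤ (∫⁻ x in Ω, K ^ p * hardyLittlewoodMaximal volume h x ^ (p / α)) ^ (1 / p) := by
        refine ENNReal.rpow_le_rpow (setLIntegral_mono' hΩ.measurableSet fun x hx => ?_)
          (by positivity)
        refine (ENNReal.rpow_le_rpow (hmax Ω f g hΩ hg x hx) hp₀.le).trans_eq ?_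
        rw [ENNReal.mul_rpow_of_nonneg _ _ hp₀.le, ← ENNReal.rpow_mul, one_div_mul_eq_div]
    _ ≤ (K ^ p * (A * ∫⁻ x in Ω, ENNReal.ofReal |g x| ^ p)) ^ (1 / p) := by
        rw [lintegral_const_mul' _ _ (by finiteness),
          ← lintegral_indicator_ofReal_rpow_rpow_div hα₀ hp₀ hΩ.measurableSet hg.2.1]
        exact ENNReal.rpow_le_rpow (mul_le_mul_right ((setLIntegral_le_lintegral _ _).trans
          (hHL h hh)) _) (by positivity)
    _ = K * A ^ (1 / p) * _root_.lpNorm n p g (volume.restrict Ω) := by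
        have hp' : 0 ≤ 1 / p := by positivity
        rw [ENNReal.mul_rpow_of_nonneg _ _ hp', ENNReal.mul_rpow_of_nonneg _ _ hp',
          ← ENNReal.rpow_mul, mul_one_div_cancel hp₀.ne', ENNReal.rpow_one, mul_assoc,
          _root_.lpNorm]

end MaximalFunctionBound

section LocallyIntegrable

variable {X : Type*} [MeasurableSpace X] {Ω K : Set X} {μ : Measure X} {f : X → ℝ}

lemma integrable_mul_of_locallyIntegrableOn [TopologicalSpace X] [OpensMeasurableSpace X]
    [T2Space X] {k : X → ℝ} (hf : LocallyIntegrableOn f Ω μ) (hK : IsCompact K) (hKΩ : K ⊆ Ω)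
    (hk : Continuous k) (hk₀ : ∀ z ∉ K, k z = 0) : Integrable (fun z => f z * k z) μ :=
  (integrableOn_iff_integrable_of_support_subset fun z hz => by
    by_contra hzK
    exact hz (mul_eq_zero_of_right _ (hk₀ z hzK))).1
    ((hf.integrableOn_compact_subset hKΩ hK).mul_continuousOn hk.continuousOn hK)

lemma hasDerivAt_integral_mul_of_isCompact [TopologicalSpace X] [OpensMeasurableSpace X] [T2Space X]
    {k k' : ℝ → X → ℝ} {U : Set ℝ} {t D : ℝ} (hf : LocallyIntegrableOn f Ω μ) (hK : IsCompact K)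
    (hKΩ : K ⊆ Ω) (hU : IsOpen U) (ht : t ∈ U) (hk : ∀ s ∈ U, Continuous (k s))
    (hk₀ : ∀ s ∈ U, ∀ z ∉ K, k s z = 0) (hk' : Continuous (k' t))
    (hbound : ∀ s ∈ U, ∀ z, |k' s z| ≤ D)
    (hderiv : ∀ s ∈ U, ∀ z, HasDerivAt (fun s => k s z) (k' s z) s) :
    HasDerivAt (fun s => ∫ z, f z * k s z ∂μ) (∫ z, f z * k' t z ∂μ) t := by
  have hfK : IntegrableOn f K μ := hf.integrableOn_compact_subset hKΩ hK
  have hU' : ∀ᶠ s in nhds t, s ∈ U := hU.mem_nhds ht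
  have hk'₀ : ∀ z ∉ K, k' t z = 0 := fun z hz =>
    (hderiv t ht z).unique ((hasDerivAt_const t 0).congr_of_eventuallyEq
      (hU'.mono fun s hs => hk₀ s hs z hz))
  have hint : ∀ {g : X → ℝ}, Continuous g → IntegrableOn (fun z => f z * g z) K μ :=
    fun hg => hfK.mul_continuousOn hg.continuousOn hK
  have hderivK := (hasDerivAt_integral_of_dominated_loc_of_deriv_le (μ := μ.restrict K)
    (F := fun s z => f z * k s z) (F' := fun s z => f z * k' s z) (bound := fun z => ‖f z‖ * D)
    (hU.mem_nhds ht) (hU'.mono fun s hs => (hint (hk s hs)).aestronglyMeasurable)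
    (hint (hk t ht)) (hint hk').aestronglyMeasurable
    (.of_forall fun z s hs => by
      rw [norm_mul]
      exact mul_le_mul_of_nonneg_left (hbound s hs z) (norm_nonneg _))
    (hfK.norm.mul_const D) (.of_forall fun z s hs => (hderiv s hs z).const_mul (f z))).2
  rw [setIntegral_eq_integral_of_forall_compl_eq_zero fun z hz => by
    rw [hk'₀ z hz, mul_zero]] at hderivK
  refine hderivK.congr_of_eventuallyEq (hU'.mono fun s hs => ?_)
  exact (setIntegral_eq_integral_of_forall_compl_eq_zero fun z hz => by
    rw [hk₀ s hs z hz, mul_zero]).symm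

/-- `x` is a Lebesgue point of `f`: the means of `|f - f x|` over the closed balls centered at `x`
tend to `0` with the radius. -/
def IsLebesguePoint [PseudoMetricSpace X] (μ : Measure X) (f : X → ℝ) (x : X) : Prop :=
  Filter.Tendsto (fun r : ℝ => ⨍ y in closedBall x r, ‖f y - f x‖ ∂μ) (nhdsWithin 0 (Ioi 0))
    (nhds 0)

lemma ae_isLebesguePoint_of_locallyIntegrableOn [PseudoMetricSpace X] [ProperSpace X]
    [SecondCountableTopology X] [BorelSpace X] [IsLocallyFiniteMeasure μ]
    [IsUnifLocDoublingMeasure μ] (hΩ : IsOpen Ω) (hf : LocallyIntegrableOn f Ω μ) :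
    ∀ᵐ x ∂μ, x ∈ Ω → IsLebesguePoint μ f x := by
  refine measure_null_of_locally_null _ fun x hx => ?_
  obtain ⟨hxΩ, -⟩ := Classical.not_imp.1 hx
  obtain ⟨ε, hε, hεΩ⟩ := nhds_basis_closedBall.mem_iff.1 (hΩ.mem_nhds hxΩ)
  set g := (closedBall x ε).indicator f
  have hg : Integrable g μ := (integrable_indicator_iff measurableSet_closedBall).2
    (hf.integrableOn_compact_subset hεΩ (isCompact_closedBall _ _))
  have hgf : ∀ z ∈ closedBall x ε, g z = f z := fun z hz => indicator_of_mem hz f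
  refine ⟨_, Filter.inter_mem (mem_nhdsWithin_of_mem_nhds (ball_mem_nhds x hε))
    self_mem_nhdsWithin, measure_mono_null ?_ (ae_iff.1
      (IsUnifLocDoublingMeasure.ae_tendsto_average_norm_sub μ hg.locallyIntegrable 1))⟩
  rintro y ⟨hy, hyf⟩ hyg
  refine hyf fun _ => ?_
  have hlim := hyg (l := nhdsWithin (0 : ℝ) (Ioi 0)) (fun _ => y) (fun r => r) Filter.tendsto_id
    (by filter_upwards [self_mem_nhdsWithin] with r hr using by simpa using (mem_Ioi.1 hr).le)
  refine hlim.congr' ?_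
  filter_upwards [Ioc_mem_nhdsGT (sub_pos.2 (mem_ball.1 hy))] with r hr
  refine setAverage_congr_fun measurableSet_closedBall (.of_forall fun z hz => ?_)
  rw [hgf y (ball_subset_closedBall hy), hgf z (closedBall_subset_closedBall' (by
    linarith [hr.2]) hz)]

end LocallyIntegrable

section HajlaszGradientBound

variable {n : ℕ} {Ω : Set (EuclideanSpace ℝ (Fin n))} {f φ : EuclideanSpace ℝ (Fin n) → ℝ}
  {x c : EuclideanSpace ℝ (Fin n)} {s t r R : ℝ} {M : ℝ≥0}

lemma memTestClassOne.abs_integral_mul_pderivIdx_le (hφ : memTestClassOne n x r φ)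
    (hΩ : IsOpen Ω) (hx : x ∈ Ω) (hr : 0 < r) (hrΩ : r ≤ infDist x (frontier Ω) / 2)
    (hM : miyachiMax n Ω f x ≤ M) (j : Fin n) : |∫ z, f z * pderivIdx n j φ z| ≤ M := by
  have hball : ball x r ⊆ Ω :=
    (ball_subset_ball (by linarith)).trans (ball_infDist_frontier_subset hΩ hx)
  rw [← setIntegral_eq_integral_of_forall_compl_eq_zero (s := Ω) fun z hz => by
    rw [hφ.pderivIdx_eq_zero_of_notMem_ball fun h => hz (hball h), mul_zero]]
  rw [← ENNReal.ofReal_le_ofReal_iff M.coe_nonneg, ENNReal.ofReal_coe_nnreal]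
  refine le_trans ?_ hM
  exact le_iSup_of_le j (le_iSup_of_le ⟨r, hr, hrΩ⟩ (le_iSup_of_le ⟨φ, hφ⟩ le_rfl))

lemma memTestClassOne.abs_integral_mul_pderivIdx_dilate_coordMul_le
    (hφ : memTestClassOne n c s φ) (hs : 0 < s) (hball : ball c s ⊆ ball 0 1) (hΩ : IsOpen Ω)
    (hx : x ∈ Ω) (ht : 0 < t) (htΩ : t ≤ infDist x (frontier Ω) / 2)
    (hM : miyachiMax n Ω f x ≤ M) (j : Fin n) :
    |∫ z, f z * pderivIdx n j (_root_.dilate x t (_root_.coordMul j φ)) z| ≤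
      (s⁻¹ ^ n + s⁻¹ ^ (n + 1)) * M := by
  set L := s⁻¹ ^ n + s⁻¹ ^ (n + 1)
  have hL : 0 < L := by positivity
  have htest : memTestClassOne n x t (_root_.dilate x t fun w => L⁻¹ * _root_.coordMul j φ w) := by
    simpa only [smul_zero, add_zero, mul_one] using (hφ.coordMul hs hball j).dilate (x := x) ht
  have hdiff : Differentiable ℝ (_root_.coordMul j φ) := by
    have := hφ.differentiable
    unfold _root_.coordMul
    fun_prop
  have hscale : ∀ z, pderivIdx n j (_root_.dilate x t fun w => L⁻¹ * _root_.coordMul j φ w) z =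
      L⁻¹ * pderivIdx n j (_root_.dilate x t (_root_.coordMul j φ)) z := fun z => by
    rw [pderivIdx_dilate (hdiff.const_mul _), pderivIdx_dilate hdiff, pderivIdx_const_mul (hdiff _)]
    ring
  have hle := htest.abs_integral_mul_pderivIdx_le hΩ hx ht htΩ hM j
  simp only [hscale, mul_left_comm _ L⁻¹, integral_const_mul] at hle
  rwa [abs_mul, abs_of_pos (inv_pos.2 hL), inv_mul_le_iff₀ hL] at hle

lemma exists_abs_sum_pderivIdx_dilate_coordMul_le (hφ : ContDiff ℝ 1 φ)
    (hc : HasCompactSupport φ) :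
    ∃ B, 0 ≤ B ∧ ∀ x t z, 0 < t →
      |∑ j, pderivIdx n j (dilate x t (coordMul j φ)) z| ≤ t⁻¹ ^ (n + 1) * B := by
  have hsmooth : ∀ j, ContDiff ℝ 1 (coordMul j φ) := fun j => by
    unfold coordMul
    fun_prop
  have hcompact : ∀ j : Fin n, HasCompactSupport (coordMul j φ) := fun j => hc.mul_left
  have hbounded : ∀ j : Fin n, ∃ B, ∀ w, |pderivIdx n j (coordMul j φ) w| ≤ B := fun j =>
    (continuous_pderivIdx (hsmooth j)).bounded_above_of_compact_support
      ((hcompact j).fderiv_apply (𝕜 := ℝ) (EuclideanSpace.single j 1))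
  choose B hB using hbounded
  refine ⟨∑ j, B j, Finset.sum_nonneg fun j _ => (abs_nonneg _).trans (hB j 0), fun x t z ht => ?_⟩
  simp only [pderivIdx_dilate ((hsmooth _).differentiable one_ne_zero)]
  rw [← Finset.mul_sum, abs_mul, abs_of_pos (by positivity)]
  gcongr
  exact (Finset.abs_sum_le_sum_abs _ _).trans (Finset.sum_le_sum fun j _ => hB j _)

lemma hasDerivAt_integral_mul_dilate (hf : LocallyIntegrableOn f Ω) (hφ : ContDiff ℝ 1 φ)
    (hsupp : tsupport φ ⊆ ball 0 1) (ht : 0 < t) (hball : ball x (2 * t) ⊆ Ω) :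
    HasDerivAt (fun t => ∫ z, f z * dilate x t φ z)
      (-∑ j, ∫ z, f z * pderivIdx n j (dilate x t (coordMul j φ)) z) t := by
  have hc : HasCompactSupport φ := (isCompact_closedBall 0 1).of_isClosed_subset
    (isClosed_tsupport φ) (hsupp.trans ball_subset_closedBall)
  have hK : closedBall x (3 / 2 * t) ⊆ Ω := (closedBall_subset_ball (by linarith)).trans hball
  have hsupport : ∀ {χ : EuclideanSpace ℝ (Fin n) → ℝ} {s : ℝ}, tsupport χ ⊆ ball 0 1 →
      s ∈ Ioo (t / 2) (3 / 2 * t) → tsupport (dilate x s χ) ⊆ closedBall x (3 / 2 * t) :=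
    fun hχ hs => (tsupport_dilate_subset (by linarith [hs.1]) hχ).trans (by
      simpa using (ball_subset_closedBall.trans (closedBall_subset_closedBall hs.2.le)))
  have hsmooth : ∀ j, ContDiff ℝ 1 (dilate x t (coordMul j φ)) := fun j => by
    unfold dilate coordMul
    fun_prop
  have ht' : t ∈ Ioo (t / 2) (3 / 2 * t) := ⟨by linarith, by linarith⟩
  obtain ⟨B, hB₀, hB⟩ := exists_abs_sum_pderivIdx_dilate_coordMul_le hφ hc
  have hderiv := hasDerivAt_integral_mul_of_isCompact (D := (t / 2)⁻¹ ^ (n + 1) * B) hf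
    (isCompact_closedBall x (3 / 2 * t)) hK isOpen_Ioo ht'
    (k := fun s => dilate x s φ)
    (k' := fun s z => -∑ j, pderivIdx n j (dilate x s (coordMul j φ)) z)
    (fun s _ => by have := hφ.continuous; unfold dilate; fun_prop)
    (fun s hs z hz => image_eq_zero_of_notMem_tsupport fun h => hz (hsupport hsupp hs h))
    (continuous_finsetSum _ fun j _ => continuous_pderivIdx (hsmooth j)).neg
    (fun s hs z => by
      have hs₀ : 0 < s := by linarith [hs.1]
      rw [abs_neg]
      refine (hB x s z hs₀).trans ?_
      gcongr
      exact hs.1.le)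
    (fun s hs z => hasDerivAt_dilate (hφ.differentiable one_ne_zero) (by linarith [hs.1]))
  refine hderiv.congr_deriv ?_
  simp only [mul_neg, Finset.mul_sum]
  rw [integral_neg, integral_finsetSum]
  exact fun j _ => integrable_mul_of_locallyIntegrableOn hf (isCompact_closedBall x _) hK
    (continuous_pderivIdx (hsmooth j)) fun z hz => pderivIdx_eq_zero_of_notMem_tsupport fun h =>
      hz (hsupport (tsupport_mul_subset_right.trans hsupp) ht' h)

lemma memTestClassOne.abs_integral_mul_dilate_sub_le (hφ : memTestClassOne n c s φ) (hs : 0 < s)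
    (hball : ball c s ⊆ ball 0 1) (hΩ : IsOpen Ω) (hf : LocallyIntegrableOn f Ω) (hx : x ∈ Ω)
    (hM : miyachiMax n Ω f x ≤ M) (hRΩ : R ≤ infDist x (frontier Ω) / 2) (hR : 0 < R)
    (ht : t ∈ Ioc 0 R) :
    |(∫ z, f z * _root_.dilate x R φ z) - ∫ z, f z * _root_.dilate x t φ z| ≤
      n * ((s⁻¹ ^ n + s⁻¹ ^ (n + 1)) * M) * R := by
  have hderiv : ∀ u ∈ Ioc 0 R, HasDerivWithinAt (fun u => ∫ z, f z * _root_.dilate x u φ z)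
      (-∑ j, ∫ z, f z * pderivIdx n j (_root_.dilate x u (_root_.coordMul j φ)) z)
      (Ioc 0 R) u := fun u hu =>
    (hasDerivAt_integral_mul_dilate hf (hφ.contDiff 1) (hφ.2.1.trans hball) hu.1
      ((ball_subset_ball (by linarith [hu.2])).trans
        (ball_infDist_frontier_subset hΩ hx))).hasDerivWithinAt
  have hbound : ∀ u ∈ Ioc 0 R,
      ‖-∑ j, ∫ z, f z * pderivIdx n j (_root_.dilate x u (_root_.coordMul j φ)) z‖ ≤
        n * ((s⁻¹ ^ n + s⁻¹ ^ (n + 1)) * M) := fun u hu => by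
    rw [norm_neg]
    refine (norm_sum_le_of_le _ fun j _ => hφ.abs_integral_mul_pderivIdx_dilate_coordMul_le hs hball
      hΩ hx hu.1 (hu.2.trans hRΩ) hM j).trans_eq ?_
    simp
  refine (Convex.norm_image_sub_le_of_norm_hasDerivWithin_le hderiv hbound (convex_Ioc 0 R) ht
    (right_mem_Ioc.2 hR)).trans ?_
  gcongr
  rw [Real.norm_eq_abs, abs_of_nonneg (by linarith [ht.2])]
  linarith [ht.1]

lemma tendsto_integral_mul_dilate {A : ℝ} (hA : ∀ w, |φ w| ≤ A)
    (hsupp : tsupport φ ⊆ ball 0 1) (hφ : ∫ w, φ w ≠ 0)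
    (hf : IntegrableAtFilter f (nhds x))
    (hx : IsLebesguePoint volume f x) :
    Filter.Tendsto (fun t => ∫ z, f z * dilate x t φ z) (nhdsWithin 0 (Ioi 0))
      (nhds ((∫ w, φ w) * f x)) := by
  obtain ⟨V, hV, hfV⟩ := hf
  obtain ⟨ε, hε, hεV⟩ := nhds_basis_closedBall.mem_iff.1 hV
  have hvol : 0 < volume.real (ball (0 : EuclideanSpace ℝ (Fin n)) 1) :=
    ENNReal.toReal_pos (measure_ball_pos _ _ one_pos).ne' measure_ball_ne_top
  have hpos : ∀ᶠ t : ℝ in nhdsWithin 0 (Ioi 0), 0 < t := self_mem_nhdsWithin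
  have hlim := tendsto_integral_smul_of_tendsto_average_norm_sub
    (g := fun t z => (∫ w, φ w)⁻¹ * dilate x t φ z)
    (|∫ w, φ w|⁻¹ * A * volume.real (ball (0 : EuclideanSpace ℝ (Fin n)) 1)) hx
    (by filter_upwards [Ioc_mem_nhdsGT hε] with t ht using
      hfV.mono_set ((closedBall_subset_closedBall ht.2).trans hεV))
    (tendsto_const_nhds.congr' (hpos.mono fun t ht => by
      simp only [integral_const_mul, integral_dilate ht, inv_mul_cancel₀ hφ]))
    (hpos.mono fun t ht z hz => by
      have := tsupport_dilate_subset (x := x) ht hsupp (subset_tsupport _ (right_ne_zero_of_mul hz))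
      rw [smul_zero, add_zero, mul_one] at this
      exact ball_subset_closedBall this)
    (hpos.mono fun t ht z => by
      rw [Measure.addHaar_real_closedBall _ _ ht.le, finrank_euclideanSpace_fin,
        mul_div_mul_right _ _ hvol.ne', abs_mul, abs_inv, dilate, abs_mul,
        abs_of_pos (pow_pos (inv_pos.2 ht) n), inv_pow, div_eq_mul_inv, mul_assoc, mul_comm A]
      gcongr
      exact hA _)
  refine (hlim.const_mul (∫ w, φ w)).congr fun t => ?_
  rw [← integral_const_mul]
  refine integral_congr_ae (.of_forall fun z => ?_)
  simp only [smul_eq_mul]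
  field_simp

lemma memTestClassOne.abs_integral_mul_dilate_sub_integral_mul_le (hφ : memTestClassOne n c s φ)
    (hs : 0 < s) (hball : ball c s ⊆ ball 0 1) (hφ₀ : ∫ w, φ w ≠ 0) (hΩ : IsOpen Ω)
    (hf : LocallyIntegrableOn f Ω) (hx : x ∈ Ω) (hM : miyachiMax n Ω f x ≤ M)
    (hlebesgue : IsLebesguePoint volume f x) (hR : 0 < R) (hRΩ : R ≤ infDist x (frontier Ω) / 2) :
    |(∫ z, f z * _root_.dilate x R φ z) - (∫ w, φ w) * f x| ≤
      n * ((s⁻¹ ^ n + s⁻¹ ^ (n + 1)) * M) * R := by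
  have hfx : IntegrableAtFilter f (nhds x) := by
    simpa only [hΩ.nhdsWithin_eq hx] using hf x hx
  have hlim := tendsto_integral_mul_dilate hφ.2.2.1 (hφ.2.1.trans hball) hφ₀ hfx hlebesgue
  refine le_of_tendsto (hlim.const_sub _).abs ?_
  filter_upwards [Ioc_mem_nhdsGT hR] with t ht using
    hφ.abs_integral_mul_dilate_sub_le hs hball hΩ hf hx hM hRΩ hR ht

lemma memTestClassOne.abs_integral_mul_dilate_sub_integral_mul_le_of_dist_le
    (hψ : memTestClassOne n 0 1 φ) (hψ₀ : ∫ w, φ w ≠ 0) (hΩ : IsOpen Ω)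
    (hf : LocallyIntegrableOn f Ω) (hx : x ∈ Ω) (hM : miyachiMax n Ω f x ≤ M)
    (hlebesgue : IsLebesguePoint volume f x) (ht : 0 < t) (htΩ : t ≤ infDist x (frontier Ω) / 4)
    (hc : dist c x ≤ t) :
    |(∫ z, f z * _root_.dilate c t φ z) - (∫ w, φ w) * f x| ≤
      n * ((2 ^ n + 2 ^ (n + 1)) * M) * (2 * t) := by
  set a : EuclideanSpace ℝ (Fin n) := (2 * t)⁻¹ • (c - x)
  have ha : ‖a‖ ≤ 1 / 2 := by
    rw [norm_smul, Real.norm_of_nonneg (by positivity), ← dist_eq_norm,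
      inv_mul_le_iff₀ (by positivity)]
    linarith
  have hball : ball a (1 / 2) ⊆ ball 0 1 := ball_subset_ball' (by rw [dist_zero_right]; linarith)
  have hmem : memTestClassOne n a (1 / 2) (_root_.dilate a (1 / 2) φ) := by
    simpa only [smul_zero, add_zero, mul_one] using hψ.dilate (x := a) one_half_pos
  have hrecenter : _root_.dilate x (2 * t) (_root_.dilate a (1 / 2) φ) = _root_.dilate c t φ := by
    rw [dilate_dilate (by positivity), smul_inv_smul₀ (by positivity), add_sub_cancel]
    congr 1
    ring
  have hint : ∫ w, _root_.dilate a (1 / 2) φ w = ∫ w, φ w := integral_dilate one_half_pos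
  have hle := hmem.abs_integral_mul_dilate_sub_integral_mul_le one_half_pos hball (hint ▸ hψ₀) hΩ hf
    hx hM hlebesgue (R := 2 * t) (by positivity) (by linarith)
  rwa [hrecenter, hint, one_div, inv_inv] at hle

lemma memTestClassOne.integral_mul_abs_sub_le {y : EuclideanSpace ℝ (Fin n)} {M' : ℝ≥0}
    (hψ : memTestClassOne n 0 1 φ) (hψ₀ : 0 < ∫ w, φ w) (hΩ : IsOpen Ω)
    (hf : LocallyIntegrableOn f Ω) (hx : x ∈ Ω) (hy : y ∈ Ω) (hxf : IsLebesguePoint volume f x)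
    (hyf : IsLebesguePoint volume f y) (hM : miyachiMax n Ω f x ≤ M)
    (hM' : miyachiMax n Ω f y ≤ M')
    (hxy : ‖x - y‖ ≤ 1 / 4 * min (infDist x (frontier Ω)) (infDist y (frontier Ω))) :
    (∫ w, φ w) * |f x - f y| ≤ 2 * n * (2 ^ n + 2 ^ (n + 1)) * ‖x - y‖ * (M + M') := by
  rcases eq_or_ne x y with rfl | hne
  · simp
  have ht : 0 < ‖x - y‖ := norm_pos_iff.2 (sub_ne_zero.2 hne)
  have hx_le := hψ.abs_integral_mul_dilate_sub_integral_mul_le_of_dist_le (c := x) hψ₀.ne' hΩ hf hx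
    hM hxf ht (by linarith [min_le_left (infDist x (frontier Ω)) (infDist y (frontier Ω))])
    (by simp)
  have hy_le := hψ.abs_integral_mul_dilate_sub_integral_mul_le_of_dist_le (c := x) hψ₀.ne' hΩ hf hy
    hM' hyf ht (by linarith [min_le_right (infDist x (frontier Ω)) (infDist y (frontier Ω))])
    (dist_eq_norm x y).le
  have hmul : |(∫ w, φ w) * f x - (∫ w, φ w) * f y| = (∫ w, φ w) * |f x - f y| := by
    rw [← mul_sub, abs_mul, abs_of_pos hψ₀]
  rw [abs_sub_comm] at hx_le
  linarith [abs_sub_le ((∫ w, φ w) * f x) (∫ z, f z * _root_.dilate x ‖x - y‖ φ z)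
    ((∫ w, φ w) * f y)]

lemma exists_ofReal_abs_sub_le_mul_miyachiMax (n : ℕ) :
    ∃ C : ℝ≥0∞, 1 ≤ C ∧ C ≠ ⊤ ∧ ∀ (Ω : Set (EuclideanSpace ℝ (Fin n))) (f : _ → ℝ), IsOpen Ω →
      LocallyIntegrableOn f Ω → ∃ E, volume E = 0 ∧ ∀ x ∈ Ω \ E, ∀ y ∈ Ω \ E,
        ‖x - y‖ ≤ 1 / 4 * min (infDist x (frontier Ω)) (infDist y (frontier Ω)) →
          ENNReal.ofReal |f x - f y| ≤
            ENNReal.ofReal ‖x - y‖ * (C * miyachiMax n Ω f x + C * miyachiMax n Ω f y) := by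
  obtain ⟨ψ, hψ, hψ₀⟩ := exists_memTestClassOne_integral_pos n
  set D : ℝ := (∫ w, ψ w)⁻¹ * (2 * n * (2 ^ n + 2 ^ (n + 1)))
  refine ⟨1 + ENNReal.ofReal D, le_self_add, by finiteness, fun Ω f hΩ hf =>
    ⟨_, ae_iff.1 (ae_isLebesguePoint_of_locallyIntegrableOn hΩ hf), fun x hx y hy hxy => ?_⟩⟩
  obtain ⟨hxΩ, hxf⟩ := hx
  obtain ⟨hyΩ, hyf⟩ := hy
  rcases eq_or_ne x y with rfl | hne
  · simp
  have hdist : ‖x - y‖ₑ ≠ 0 := by simpa [sub_eq_zero] using hne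
  rcases eq_or_ne (miyachiMax n Ω f x) ⊤ with htop | hMx
  · simp [htop, hdist]
  rcases eq_or_ne (miyachiMax n Ω f y) ⊤ with htop | hMy
  · simp [htop, hdist]
  lift miyachiMax n Ω f x to ℝ≥0 using hMx with M hM
  lift miyachiMax n Ω f y to ℝ≥0 using hMy with M' hM'
  have hle := hψ.integral_mul_abs_sub_le hψ₀ hΩ hf hxΩ hyΩ (not_not.1 hxf hxΩ) (not_not.1 hyf hyΩ)
    hM.ge hM'.ge hxy
  rw [← le_inv_mul_iff₀ hψ₀] at hle
  calc ENNReal.ofReal |f x - f y| ≤ ENNReal.ofReal (‖x - y‖ * (D * (M + M'))) :=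
        ENNReal.ofReal_le_ofReal (hle.trans_eq (by ring))
    _ = ENNReal.ofReal ‖x - y‖ * (ENNReal.ofReal D * (M + M')) := by
        rw [ENNReal.ofReal_mul (norm_nonneg _), ENNReal.ofReal_mul (by positivity),
          ENNReal.ofReal_add M.coe_nonneg M'.coe_nonneg, ENNReal.ofReal_coe_nnreal,
          ENNReal.ofReal_coe_nnreal]
    _ ≤ _ := by
        rw [← mul_add]
        gcongr
        exact le_add_self

end HajlaszGradientBound

theorem hardy_sobolev_on_domain_eq_ball_hajlasz_general
    (n : ℕ) (hn : 1 ≤ n) (p : ℝ) (hp : (n : ℝ) / (n + 1) < p) :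
    ∃ C : ℝ≥0∞, 1 ≤ C ∧ C ≠ ⊤ ∧
      ∀ Ω : Set (EuclideanSpace ℝ (Fin n)), IsOpen Ω → Ω ≠ univ →
      ∀ f : EuclideanSpace ℝ (Fin n) → ℝ, LocallyIntegrableOn f Ω →
        ((∀ g : EuclideanSpace ℝ (Fin n) → ℝ, IsBallHajlaszGradientOn n f g Ω →
            (∫⁻ x in Ω, miyachiMax n Ω f x ^ p) ^ (1 / p) ≤
              C * lpNorm n p g (volume.restrict Ω)) ∧
          ∃ E : Set (EuclideanSpace ℝ (Fin n)), volume E = 0 ∧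
            ∀ x ∈ Ω \ E, ∀ y ∈ Ω \ E,
              ‖x - y‖ ≤ (1 / 4) * min (infDist x (frontier Ω)) (infDist y (frontier Ω)) →
              ENNReal.ofReal |f x - f y| ≤
                ENNReal.ofReal ‖x - y‖ * (C * miyachiMax n Ω f x + C * miyachiMax n Ω f y)) := by
  obtain ⟨A, hA, hmax⟩ := exists_lintegral_miyachiMax_rpow_le hn hp
  obtain ⟨B, hB₁, hB, hpointwise⟩ := exists_ofReal_abs_sub_le_mul_miyachiMax n
  refine ⟨A + B, hB₁.trans le_add_self, by finiteness, fun Ω hΩ _ f hf => ⟨fun g hg => ?_, ?_⟩⟩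
  · exact (hmax Ω f g hΩ hg).trans (mul_le_mul_left le_self_add _)
  · obtain ⟨E, hE, hle⟩ := hpointwise Ω f hΩ hf
    refine ⟨E, hE, fun x hx y hy hxy => (hle x hx y hy hxy).trans ?_⟩
    gcongr <;> exact le_add_self

/-- **Theorem 3.4.** For a domain `Ω ⊆ ℝⁿ` and `n/(n+1) < p ≤ 1`:
`H^{1,p}(Ω) = M^{1,p}_{ball}(Ω)`. (i) If `g ∈ L^p(Ω)` is a ball-Hajlasz gradient of `f`
then `‖𝔐_Ω f‖_{L^p(Ω)} ≤ C ‖g‖_{L^p(Ω)}`; (ii) if `𝔐_Ω f ∈ L^p(Ω)` then `C · 𝔐_Ω f`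
is a ball-Hajlasz gradient of `f` on `Ω`. The constant `C = C(n,p)` is independent of
the domain. -/
theorem hardy_sobolev_on_domain_eq_ball_hajlasz
    (n : ℕ) (hn : 1 ≤ n) (p : ℝ) (hp1 : (n : ℝ) / (n + 1) < p) (hp2 : p ≤ 1) :
    ∃ C : ℝ≥0∞, 1 ≤ C ∧ C ≠ ⊤ ∧
      ∀ Ω : Set (EuclideanSpace ℝ (Fin n)), IsOpen Ω → IsConnected Ω → Ω ≠ univ →
      ∀ f : EuclideanSpace ℝ (Fin n) → ℝ, LocallyIntegrableOn f Ω →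
        ((∀ g : EuclideanSpace ℝ (Fin n) → ℝ, IsBallHajlaszGradientOn n f g Ω →
            (∫⁻ x in Ω, miyachiMax n Ω f x ^ p) ^ (1 / p) ≤
              C * lpNorm n p g (volume.restrict Ω)) ∧
          ((∫⁻ x in Ω, miyachiMax n Ω f x ^ p) ^ (1 / p) ≠ ⊤ →
            ∃ E : Set (EuclideanSpace ℝ (Fin n)), volume E = 0 ∧
              ∀ x ∈ Ω \ E, ∀ y ∈ Ω \ E,
                ‖x - y‖ ≤ (1 / 4) * min (infDist x (frontier Ω))
                    (infDist y (frontier Ω)) →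
                ENNReal.ofReal |f x - f y| ≤
                  ENNReal.ofReal ‖x - y‖ *
                    (C * miyachiMax n Ω f x + C * miyachiMax n Ω f y))) := by
  obtain ⟨C, hC₁, hC, h⟩ := hardy_sobolev_on_domain_eq_ball_hajlasz_general n hn p hp1
  exact ⟨C, hC₁, hC, fun Ω hΩ _ hΩu f hf => (h Ω hΩ hΩu f hf).imp_right fun hE _ => hE⟩
end
end

section
/- Let n ≥ 1, n/(n+1) < p ≤ 1, c ≥ 1, and let Ω ⊆ ℝⁿ be a bounded c-uniform domain. There is a constant C = C(n,p,Ω) such that for every f ∈ L^p(Ω) possessing a Hajlasz gradient g ∈ L^p(Ω) on Ω, there exist a function F : ℝⁿ → ℝ and G ∈ L^p(ℝⁿ) such that F = f almost everywhere on Ω, F ∈ L^p(ℝⁿ), G is a Hajlasz gradient of F on ℝⁿ, and ‖F‖_{L^p(ℝⁿ)} + ‖G‖_{L^p(ℝⁿ)} ≤ C·(‖f‖_{L^p(Ω)} + ‖g‖_{L^p(Ω)}). In particular every element of M^{1,p}(Ω) is the restriction to Ω of an element of M^{1,p}(ℝⁿ) = H^{1,p}(ℝⁿ). -/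
open MeasureTheory Metric Set ENNReal NNReal

noncomputable section

/-- `g` is a Hajlasz gradient of `u` on `U ⊆ ℝⁿ`: `g` is measurable, nonnegative, and
off a set of measure zero `|u x - u y| ≤ ‖x - y‖ (g x + g y)` for `x, y ∈ U`. -/
def IsHajlaszGradientOn (n : ℕ) (u g : EuclideanSpace ℝ (Fin n) → ℝ)
    (U : Set (EuclideanSpace ℝ (Fin n))) : Prop :=
  Measurable g ∧ (∀ x, 0 ≤ g x) ∧
    ∃ E : Set (EuclideanSpace ℝ (Fin n)), MeasureTheory.volume E = 0 ∧
      ∀ x ∈ U \ E, ∀ y ∈ U \ E, |u x - u y| ≤ ‖x - y‖ * (g x + g y)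

/-- `Ω` is a `c`-uniform domain: it is open and connected, and every pair of points is
joined by a `1`-Lipschitz curve `γ : [0,T] → Ω` with `T ≤ c ‖x - y‖` and
`B(γ(t), min(t, T-t)/c) ⊆ Ω` for `t ∈ (0,T)`. -/
def IsUniformDomain (n : ℕ) (c : ℝ) (Ω : Set (EuclideanSpace ℝ (Fin n))) : Prop :=
  IsOpen Ω ∧ IsConnected Ω ∧
    ∀ x ∈ Ω, ∀ y ∈ Ω, ∃ (T : ℝ) (γ : ℝ → EuclideanSpace ℝ (Fin n)),
      0 ≤ T ∧ T ≤ c * ‖x - y‖ ∧ LipschitzOnWith 1 γ (Icc 0 T) ∧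
      γ 0 = x ∧ γ T = y ∧ (∀ t ∈ Icc (0 : ℝ) T, γ t ∈ Ω) ∧
      ∀ t ∈ Ioo (0 : ℝ) T, ball (γ t) (min t (T - t) / c) ⊆ Ω

/-!
Uniformity enters only through a corkscrew condition: near every point within small distance `s`
of `Ω` there is a ball of radius comparable to `s` inside `Ω`. Hence `∂Ω` is porous, so it is null,
and every exterior point near `Ω` is reflected to boundedly many members of a disjoint family of
Whitney balls of comparable size and distance. In each Whitney ball choose a sample point at which
`(|f| + g) ^ p` is at most its mean, and extend `f` by averaging its values at the sample points
against a Lipschitz partition of unity.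

The value of the extension at `x` is a convex combination of the values of `f` on a finite set, the
shadow of `x`, lying in `Ω` within distance comparable to `dist(x, Ω)`. For `x` and `y` far apart
relative to `dist(x, Ω)`, the Hajlasz inequality between their shadows gives the one for the
extension. For `x` and `y` close together it follows from the Lipschitz bound on the partition of
unity and the small oscillation of `f` on the shadow. In both cases the new gradient is a multiple
of the largest value of `|f| + g` on the shadow, whose `L^p` norm is controlled by disjointness of
the Whitney balls and the choice of the sample points; no maximal function is needed. A cutoff
supported near `Ω` completes the construction.
-/

open Filter Topology Module

section MetricLemmas

variable {X : Type*} [PseudoMetricSpace X]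

lemma abs_infDist_sub_infDist_le (s : Set X) (x y : X) :
    |infDist x s - infDist y s| ≤ dist x y := by
  simpa [Real.dist_eq] using (lipschitz_infDist_pt s).dist_le_mul x y

lemma notMem_of_infDist_pos {s : Set X} {x : X} (hx : 0 < infDist x s) : x ∉ s :=
  fun h => hx.ne' (infDist_zero_of_mem h)

lemma infDist_pos_of_notMem_frontier {s : Set X} (hs : IsOpen s) (hne : s.Nonempty) {x : X}
    (hxs : x ∉ s) (hx : x ∉ frontier s) : 0 < infDist x s := by
  rw [← infDist_pos_iff_notMem_closure hne]
  exact fun hcl => hx ⟨hcl, by rwa [hs.interior_eq]⟩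

lemma measure_eq_zero_of_porous [MeasurableSpace X] [BorelSpace X] [SecondCountableTopology X]
    (μ : Measure X) [IsUnifLocDoublingMeasure μ] [IsLocallyFiniteMeasure μ] {s : Set X}
    (hs : MeasurableSet s) {δ K : ℝ} (hδ : 0 < δ)
    (hporous : ∀ x ∈ s, ∀ r, 0 < r → r < δ → ∃ a, dist x a ≤ K * r ∧ Disjoint s (closedBall a r)) :
    μ s = 0 := by
  have hfalse : ∀ᵐ _ ∂μ.restrict s, False := by
    filter_upwards [IsUnifLocDoublingMeasure.ae_tendsto_measure_inter_div μ s K,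
      ae_restrict_mem hs] with x hdensity hx
    have : Nonempty X := ⟨x⟩
    choose! a hdist hdisj using hporous x hx
    have hsmall : ∀ᶠ r : ℝ in 𝓝[>] 0, 0 < r ∧ r < δ := Ioo_mem_nhdsGT hδ
    have hone := hdensity a id tendsto_id <| hsmall.mono fun r hr =>
      mem_closedBall.2 (hdist r hr.1 hr.2)
    have hzero : Tendsto (fun r => μ (s ∩ closedBall (a r) r) / μ (closedBall (a r) r))
        (𝓝[>] 0) (𝓝 0) := tendsto_const_nhds.congr' <| hsmall.mono fun r hr => by
      simp [(hdisj r hr.1 hr.2).inter_eq]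
    exact zero_ne_one (tendsto_nhds_unique hzero hone)
  rwa [Filter.eventually_false_iff_eq_bot, ae_eq_bot, Measure.restrict_eq_zero] at hfalse

lemma norm_centerMass_sub_centerMass_le {ι V : Type*} [SeminormedAddCommGroup V] [NormedSpace ℝ V]
    {S : Finset ι} {q r : ι → ℝ} {a : ι → V} {M : ℝ} (hr : ∀ i ∈ S, 0 ≤ r i)
    (hqsum : 0 < ∑ i ∈ S, q i) (hrsum : 0 < ∑ i ∈ S, r i)
    (ha : ∀ i ∈ S, ∀ j ∈ S, ‖a i - a j‖ ≤ M) :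
    ‖S.centerMass q a - S.centerMass r a‖ ≤ M * (∑ i ∈ S, |q i - r i|) / ∑ i ∈ S, q i := by
  set m := S.centerMass r a with hm
  have hdist : ∀ i ∈ S, ‖a i - m‖ ≤ M := fun i hi => by
    have : m ∈ closedBall (a i) M := (convex_closedBall (a i) M).centerMass_mem hr hrsum
      fun j hj => by rw [mem_closedBall, dist_eq_norm]; exact ha j hj i hi
    rwa [mem_closedBall, dist_comm, dist_eq_norm] at this
  have hbalance : ∑ i ∈ S, r i • (a i - m) = 0 := by
    simp only [smul_sub, Finset.sum_sub_distrib, ← Finset.sum_smul, hm, Finset.centerMass,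
      smul_inv_smul₀ hrsum.ne', sub_self]
  have hdiff : S.centerMass q a - m =
      (∑ i ∈ S, q i)⁻¹ • ∑ i ∈ S, (q i - r i) • (a i - m) := by
    simp only [sub_smul, Finset.sum_sub_distrib, hbalance, sub_zero]
    simp only [smul_sub, Finset.sum_sub_distrib, ← Finset.sum_smul, inv_smul_smul₀ hqsum.ne',
      Finset.centerMass]
  rw [hdiff, norm_smul, norm_inv, Real.norm_of_nonneg hqsum.le, inv_mul_eq_div]
  gcongr
  calc ‖∑ i ∈ S, (q i - r i) • (a i - m)‖
      ≤ ∑ i ∈ S, M * |q i - r i| := by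
        refine norm_sum_le_of_le S fun i hi => ?_
        rw [norm_smul, mul_comm, Real.norm_eq_abs]
        exact mul_le_mul_of_nonneg_right (hdist i hi) (abs_nonneg _)
    _ = M * ∑ i ∈ S, |q i - r i| := (Finset.mul_sum ..).symm

end MetricLemmas

section Corkscrew

/-- The interior corkscrew condition at scales below `δ`: every closed ball of radius `3 * s`
centred within distance `s` of `Ω` contains the centre of a ball of radius `s / c` inside `Ω`.
This is the only geometric consequence of uniformity on which the extension depends. -/
def HasCorkscrew {X : Type*} [PseudoMetricSpace X] (c δ : ℝ) (Ω : Set X) : Prop :=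
  ∀ (x : X) (s : ℝ), 0 < s → s < δ → infDist x Ω ≤ s → ∃ a, dist x a ≤ 3 * s ∧ ball a (s / c) ⊆ Ω

lemma IsUniformDomain.exists_ball_subset {n : ℕ} {c : ℝ} {Ω : Set (EuclideanSpace ℝ (Fin n))}
    (hΩ : IsUniformDomain n c Ω) {y v : EuclideanSpace ℝ (Fin n)} (hy : y ∈ Ω) (hv : v ∈ Ω) {s : ℝ}
    (hs : 0 < s) (hsv : 2 * s ≤ dist y v) : ∃ a, dist y a ≤ s ∧ ball a (s / c) ⊆ Ω := by
  obtain ⟨T, γ, hT, -, hγ, rfl, rfl, -, hball⟩ := hΩ.2.2 y hy v hv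
  have hγ_dist : ∀ t ∈ Icc 0 T, dist (γ 0) (γ t) ≤ t := fun t ht => by
    simpa [abs_of_nonneg ht.1] using hγ.dist_le_mul 0 (left_mem_Icc.2 hT) t ht
  have hsT : 2 * s ≤ T := hsv.trans (hγ_dist T (right_mem_Icc.2 hT))
  refine ⟨γ s, hγ_dist s ⟨hs.le, by linarith⟩, ?_⟩
  simpa only [min_eq_left (show s ≤ T - s by linarith)] using hball s ⟨hs, by linarith⟩

lemma IsUniformDomain.exists_hasCorkscrew {n : ℕ} (hn : 1 ≤ n) {c : ℝ}
    {Ω : Set (EuclideanSpace ℝ (Fin n))} (hΩ : IsUniformDomain n c Ω) :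
    ∃ δ : ℝ, 0 < δ ∧ HasCorkscrew c δ Ω := by
  have : Nonempty (Fin n) := ⟨⟨0, hn⟩⟩
  obtain ⟨a, ha⟩ := hΩ.2.1.nonempty
  obtain ⟨b, hb, hab⟩ := (infinite_of_mem_nhds a (hΩ.1.mem_nhds ha)).nontrivial.exists_ne a
  refine ⟨dist b a / 4, by have := dist_pos.2 hab; positivity, fun x s hs hsδ hx => ?_⟩
  obtain ⟨y, hy, hxy⟩ := (infDist_lt_iff ⟨a, ha⟩).1 (show infDist x Ω < 2 * s by linarith)
  obtain ⟨v, hv, hyv⟩ : ∃ v ∈ Ω, 2 * s ≤ dist y v := by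
    rcases le_or_gt (2 * s) (dist y a) with h | h
    · exact ⟨a, ha, h⟩
    · exact ⟨b, hb, by linarith [dist_triangle_left b a y]⟩
  obtain ⟨w, hyw, hw⟩ := hΩ.exists_ball_subset hy hv hs hyv
  exact ⟨w, by linarith [dist_triangle x y w], hw⟩

lemma HasCorkscrew.measure_frontier_eq_zero {X : Type*} [PseudoMetricSpace X] [MeasurableSpace X]
    [BorelSpace X] [SecondCountableTopology X] {c δ : ℝ} {Ω : Set X} (hΩ : HasCorkscrew c δ Ω)
    (hc : 0 < c) (hδ : 0 < δ) (μ : Measure X) [IsUnifLocDoublingMeasure μ]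
    [IsLocallyFiniteMeasure μ] : μ (frontier Ω) = 0 := by
  refine measure_eq_zero_of_porous μ isClosed_frontier.measurableSet (δ := δ / (2 * c))
    (K := 6 * c) (by positivity) fun x hx r hr hrδ => ?_
  rw [lt_div_iff₀ (by positivity)] at hrδ
  obtain ⟨a, hxa, ha⟩ := hΩ x (2 * c * r) (by positivity) (by linarith)
    (by rw [infDist_zero_of_mem_closure hx.1]; positivity)
  refine ⟨a, by linarith, ?_⟩
  have hball : ball a (2 * r) ⊆ interior Ω := by
    refine interior_maximal ?_ isOpen_ball
    rwa [show 2 * c * r / c = 2 * r by field_simp] at ha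
  exact disjoint_interior_frontier.symm.mono_right
    ((closedBall_subset_ball (by linarith)).trans hball)

end Corkscrew

section WhitneyFamily

variable {X ι : Type*} [PseudoMetricSpace X] {Ω : Set X} {w : ι → X} {A B δ : ℝ} {x y : X} {i : ι}

/-- A family of centres `w i` of pairwise disjoint Whitney balls of `Ω`, such that each exterior
point `x` at distance less than `δ` from `Ω` has a reflection among them: a centre whose distances
to `x` and to the complement of `Ω` are comparable, up to `A`, to the distance from `x` to `Ω`. -/
structure IsWhitneyFamily (A δ : ℝ) (Ω : Set X) (w : ι → X) : Prop where
  infDist_compl_pos : ∀ i, 0 < infDist (w i) Ωᶜ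
  pairwise_disjoint : Pairwise fun i j =>
    Disjoint (closedBall (w i) (infDist (w i) Ωᶜ / 10)) (closedBall (w j) (infDist (w j) Ωᶜ / 10))
  exists_reflection : ∀ x, 0 < infDist x Ω → infDist x Ω < δ →
    ∃ i, dist x (w i) ≤ (A - 1) * infDist x Ω ∧ 2 * infDist x Ω ≤ A * infDist (w i) Ωᶜ

lemma IsWhitneyFamily.closedBall_subset (hw : IsWhitneyFamily A δ Ω w) (i : ι) :
    closedBall (w i) (infDist (w i) Ωᶜ / 10) ⊆ Ω :=
  (closedBall_subset_ball (by linarith [hw.infDist_compl_pos i])).trans ball_infDist_compl_subset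

lemma le_infDist_compl_of_ball_subset {a : X} {r : ℝ} (hne : Ωᶜ.Nonempty) (h : ball a r ⊆ Ω) :
    r ≤ infDist a Ωᶜ := by
  refine (le_infDist hne).2 fun y hy => not_lt.1 fun hlt => hy (h ?_)
  rwa [mem_ball']

lemma HasCorkscrew.exists_isWhitneyFamily [TopologicalSpace.SeparableSpace X] {c : ℝ}
    (hΩ : HasCorkscrew c δ Ω) (hc : 1 ≤ c) :
    ∃ u : Set X, u.Countable ∧ IsWhitneyFamily (7 * c) δ Ω ((↑) : u → X) := by
  obtain ⟨u, hu, hdisj, hcover⟩ :=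
    Vitali.exists_disjoint_subfamily_covering_enlargement_closedBall
      {a : X | 0 < infDist a Ωᶜ ∧ infDist a Ωᶜ ≤ 3 * δ} id (fun a => infDist a Ωᶜ / 10) (3 * δ / 10)
      (fun a ha => by linarith [ha.2]) 5 (by norm_num)
  refine ⟨u, hdisj.countable_of_nonempty_interior fun a ha => ?_, fun i => (hu i.2).1,
    fun i j hij => hdisj i.2 j.2 (Subtype.coe_ne_coe.2 hij), fun x hx hxδ => ?_⟩
  · exact ⟨a, ball_subset_interior_closedBall (mem_ball_self (by linarith [(hu ha).1]))⟩
  have hxΩ : x ∈ Ωᶜ := notMem_of_infDist_pos hx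
  obtain ⟨a, hxa, ha⟩ := hΩ x _ hx hxδ le_rfl
  have ha_lower : infDist x Ω ≤ infDist a Ωᶜ * c :=
    (div_le_iff₀ (by linarith)).1 (le_infDist_compl_of_ball_subset ⟨x, hxΩ⟩ ha)
  have ha_upper : infDist a Ωᶜ ≤ 3 * infDist x Ω :=
    (infDist_le_dist_of_mem hxΩ).trans (by rwa [dist_comm])
  have ha_pos : 0 < infDist a Ωᶜ := by nlinarith
  obtain ⟨v, hv, hsub⟩ := hcover a ⟨ha_pos, by linarith⟩
  have hav : dist a v ≤ infDist v Ωᶜ / 2 := by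
    have := mem_closedBall.1 (hsub (mem_closedBall_self (by positivity)))
    simp only [id] at this
    linarith
  have hcompare := abs_le.1 ((abs_infDist_sub_infDist_le Ωᶜ a v).trans hav)
  refine ⟨⟨v, hv⟩, ?_, ?_⟩
  · nlinarith [dist_triangle x a v]
  · nlinarith

/-- The indices of the centres that reflect `x`, with comparability constant `B`. The set is empty
unless `x` is at positive distance from `Ω`. -/
def nearIndices (Ω : Set X) (w : ι → X) (B : ℝ) (x : X) : Set ι :=
  {i | dist x (w i) < B * infDist x Ω ∧ infDist x Ω < B * infDist (w i) Ωᶜ}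

lemma infDist_pos_of_mem_nearIndices (hi : i ∈ nearIndices Ω w B x) : 0 < infDist x Ω := by
  refine infDist_nonneg.lt_of_ne fun h => ?_
  have := hi.1
  rw [← h, mul_zero] at this
  exact this.not_ge dist_nonneg

lemma infDist_compl_le_of_mem_nearIndices (hi : i ∈ nearIndices Ω w B x) :
    infDist (w i) Ωᶜ ≤ dist x (w i) := by
  rw [dist_comm]
  exact infDist_le_dist_of_mem (notMem_of_infDist_pos (infDist_pos_of_mem_nearIndices hi))

lemma nearIndices_mono {B' : ℝ} (hB : B ≤ B') : nearIndices Ω w B x ⊆ nearIndices Ω w B' x :=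
  fun _ hi => ⟨hi.1.trans_le (mul_le_mul_of_nonneg_right hB infDist_nonneg),
    hi.2.trans_le (mul_le_mul_of_nonneg_right hB infDist_nonneg)⟩

lemma nearIndices_subset_of_dist_lt (hA : 1 ≤ A) (hxy : dist x y < infDist x Ω / 2) :
    nearIndices Ω w A y ⊆ nearIndices Ω w (2 * A) x := fun i hi => by
  have hcompare := abs_le.1 (abs_infDist_sub_infDist_le Ω x y)
  refine ⟨?_, ?_⟩
  · nlinarith [hi.1, dist_triangle x y (w i)]
  · linarith [hi.2]

lemma isOpen_setOf_mem_nearIndices (Ω : Set X) (w : ι → X) (B : ℝ) (i : ι) :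
    IsOpen {x | i ∈ nearIndices Ω w B x} := by
  have hcont : Continuous fun x => infDist x Ω := continuous_infDist_pt Ω
  have hdist : IsOpen {x | dist x (w i) < B * infDist x Ω} :=
    isOpen_lt (by fun_prop) (by fun_prop)
  have hinfDist : IsOpen {x | infDist x Ω < B * infDist (w i) Ωᶜ} :=
    isOpen_lt hcont continuous_const
  exact hdist.inter hinfDist

lemma setOf_mem_nearIndices_subset_closedBall (hB : 0 ≤ B) (i : ι) :
    {x | i ∈ nearIndices Ω w B x} ⊆ closedBall (w i) (B ^ 2 * infDist (w i) Ωᶜ) :=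
  fun x hx => mem_closedBall.2 <| by nlinarith [hx.1, hx.2]

end WhitneyFamily

section BoundedOverlap

variable {E ι : Type*} [NormedAddCommGroup E] [NormedSpace ℝ E] [FiniteDimensional ℝ E]
  {Ω : Set E} {w : ι → E} {A B δ : ℝ}

lemma card_mul_pow_le_of_pairwiseDisjoint_closedBall {S : Finset ι} {r R : ℝ} (hr : 0 ≤ r)
    (hR : 0 ≤ R) (hdisj : (S : Set ι).PairwiseDisjoint fun i => closedBall (w i) r) (x : E)
    (hsub : ∀ i ∈ S, closedBall (w i) r ⊆ closedBall x R) :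
    S.card * r ^ finrank ℝ E ≤ R ^ finrank ℝ E := by
  borelize E
  set μ : Measure E := Measure.addHaar
  have hsum : ∑ i ∈ S, μ (closedBall (w i) r) ≤ μ (closedBall x R) := by
    rw [← measure_biUnion_finset hdisj fun _ _ => measurableSet_closedBall]
    exact measure_mono (iUnion₂_subset hsub)
  simp only [Measure.addHaar_closedBall μ _ hr, Measure.addHaar_closedBall μ _ hR,
    Finset.sum_const, nsmul_eq_mul, ← mul_assoc] at hsum
  rw [ENNReal.mul_le_mul_iff_left (measure_ball_pos μ _ one_pos).ne' measure_ball_lt_top.ne,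
    ← ENNReal.ofReal_natCast, ← ENNReal.ofReal_mul (by positivity),
    ENNReal.ofReal_le_ofReal_iff (by positivity)] at hsum
  exact hsum

lemma IsWhitneyFamily.card_le_of_subset_nearIndices (hw : IsWhitneyFamily A δ Ω w) (hB : 1 ≤ B)
    {x : E} {S : Finset ι} (hS : (S : Set ι) ⊆ nearIndices Ω w B x) :
    (S.card : ℝ) ≤ (20 * B ^ 2) ^ finrank ℝ E := by
  rcases S.eq_empty_or_nonempty with rfl | ⟨k, hk⟩
  · simp only [Finset.card_empty, Nat.cast_zero]; positivity
  have hx : 0 < infDist x Ω := infDist_pos_of_mem_nearIndices (hS hk)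
  set r := infDist x Ω / (10 * B) with hr_def
  have hr : 0 < r := by positivity
  have hx_eq : infDist x Ω = r * (10 * B) := by rw [hr_def]; field_simp
  have hr_le : ∀ i ∈ S, r ≤ infDist (w i) Ωᶜ / 10 := fun i hi => by
    have := (hS hi).2
    rw [hx_eq] at this
    nlinarith
  have hpack := card_mul_pow_le_of_pairwiseDisjoint_closedBall (w := w) hr.le
    (show 0 ≤ 20 * B ^ 2 * r by positivity)
    (fun i hi j hj hij => (hw.pairwise_disjoint hij).mono
      (closedBall_subset_closedBall (hr_le i hi)) (closedBall_subset_closedBall (hr_le j hj))) x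
    (fun i hi => closedBall_subset_closedBall' ?_)
  · rw [mul_pow] at hpack
    exact le_of_mul_le_mul_right hpack (by positivity)
  · have := (hS hi).1
    rw [hx_eq, dist_comm] at this
    nlinarith

lemma IsWhitneyFamily.exists_encard_nearIndices_le (hw : IsWhitneyFamily A δ Ω w) (hB : 1 ≤ B) :
    ∃ m : ℕ, ∀ x, (nearIndices Ω w B x).encard ≤ m := by
  refine ⟨⌊(20 * B ^ 2) ^ finrank ℝ E⌋₊, fun x => not_lt.1 fun hlt => ?_⟩
  obtain ⟨t, ht, htcard⟩ := exists_subset_encard_eq (Order.add_one_le_of_lt hlt)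
  have hfin : t.Finite := finite_of_encard_eq_coe htcard
  have hle := Nat.le_floor (hw.card_le_of_subset_nearIndices hB (S := hfin.toFinset) (by simpa))
  rw [hfin.encard_eq_coe_toFinset_card] at htcard
  norm_cast at htcard
  omega

end BoundedOverlap

section WhitneyAverage

variable {X ι : Type*} [PseudoMetricSpace X] {Ω : Set X} {w : ι → X} {v : ι → ℝ} {A δ : ℝ}
  {x y : X} {i : ι} {S : Finset ι}

/-- The unnormalised partition of unity: a Lipschitz function of `x` which is positive exactly when
the centre `a` reflects `x`, in the sense of `nearIndices`. -/
def whitneyBump (A : ℝ) (Ω : Set X) (a x : X) : ℝ :=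
  max (min (A * infDist x Ω - dist x a) (A * infDist a Ωᶜ - infDist x Ω)) 0

lemma whitneyBump_nonneg (A : ℝ) (Ω : Set X) (a x : X) : 0 ≤ whitneyBump A Ω a x :=
  le_max_right _ _

lemma whitneyBump_pos_iff : 0 < whitneyBump A Ω (w i) x ↔ i ∈ nearIndices Ω w A x := by
  simp [whitneyBump, nearIndices]

lemma whitneyBump_eq_zero (hi : i ∉ nearIndices Ω w A x) : whitneyBump A Ω (w i) x = 0 :=
  le_antisymm (not_lt.1 (whitneyBump_pos_iff.not.2 hi)) (whitneyBump_nonneg ..)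

lemma abs_whitneyBump_sub_le (hA : 0 ≤ A) (Ω : Set X) (a x y : X) :
    |whitneyBump A Ω a x - whitneyBump A Ω a y| ≤ (A + 1) * dist x y := by
  have hinfDist := abs_le.1 (abs_infDist_sub_infDist_le Ω x y)
  have hdist := abs_le.1 (abs_dist_sub_le x y a)
  refine (abs_max_sub_max_le_abs _ _ _).trans <|
    (abs_min_sub_min_le_max _ _ _ _).trans (max_le ?_ ?_) <;> rw [abs_le] <;>
    constructor <;> nlinarith [dist_nonneg (x := x) (y := y)]

lemma continuous_whitneyBump (A : ℝ) (Ω : Set X) (a : X) : Continuous (whitneyBump A Ω a) := by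
  have hinfDist : Continuous fun x => infDist x Ω := continuous_infDist_pt Ω
  exact (((hinfDist.const_mul A).sub (by fun_prop)).min (continuous_const.sub hinfDist)).max
    continuous_const

lemma IsWhitneyFamily.infDist_le_sum_whitneyBump (hw : IsWhitneyFamily A δ Ω w)
    (hx : 0 < infDist x Ω) (hxδ : infDist x Ω < δ) (hS : nearIndices Ω w A x ⊆ S) :
    infDist x Ω ≤ ∑ i ∈ S, whitneyBump A Ω (w i) x := by
  obtain ⟨i, hdist, hinfDist⟩ := hw.exists_reflection x hx hxδ
  have hi : infDist x Ω ≤ whitneyBump A Ω (w i) x :=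
    le_max_of_le_left (le_min (by linarith) (by linarith))
  exact hi.trans <| Finset.single_le_sum (f := fun i => whitneyBump A Ω (w i) x)
    (fun j _ => whitneyBump_nonneg ..) (hS (whitneyBump_pos_iff.1 (hx.trans_le hi)))

/-- The average of the values `v i` against the partition of unity obtained by normalising the
bumps of the centres `w i`. -/
def whitneyAverage (A : ℝ) (Ω : Set X) (w : ι → X) (v : ι → ℝ) (x : X) : ℝ :=
  (∑' i, whitneyBump A Ω (w i) x)⁻¹ * ∑' i, whitneyBump A Ω (w i) x * v i

lemma whitneyAverage_eq_centerMass (hS : nearIndices Ω w A x ⊆ S) :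
    whitneyAverage A Ω w v x = S.centerMass (fun i => whitneyBump A Ω (w i) x) v := by
  have hzero : ∀ i ∉ S, whitneyBump A Ω (w i) x = 0 := fun i hi =>
    whitneyBump_eq_zero fun h => hi (hS h)
  rw [whitneyAverage, Finset.centerMass, tsum_eq_sum hzero,
    tsum_eq_sum fun i hi => by rw [hzero i hi, zero_mul]]
  simp only [smul_eq_mul]

lemma measurable_whitneyAverage [MeasurableSpace X] [OpensMeasurableSpace X] [Countable ι]
    (A : ℝ) (Ω : Set X) (w : ι → X) (v : ι → ℝ) : Measurable (whitneyAverage A Ω w v) := by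
  have hbump i : Measurable (whitneyBump A Ω (w i)) := (continuous_whitneyBump A Ω (w i)).measurable
  exact (Measurable.tsum hbump).inv.mul (Measurable.tsum fun i => (hbump i).mul_const (v i))

lemma IsWhitneyFamily.abs_whitneyAverage_sub_le (hw : IsWhitneyFamily A δ Ω w) (hA : 1 ≤ A)
    {m : ℕ} (hm : (nearIndices Ω w (2 * A) x).encard ≤ m) (hxδ : infDist x Ω < δ)
    (hyδ : infDist y Ω < δ) (hxy : dist x y < infDist x Ω / 2) {M : ℝ}
    (hv : ∀ i ∈ nearIndices Ω w (2 * A) x, ∀ j ∈ nearIndices Ω w (2 * A) x, |v i - v j| ≤ M) :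
    |whitneyAverage A Ω w v x - whitneyAverage A Ω w v y| ≤
      M * (m * ((A + 1) * dist x y)) / infDist x Ω := by
  have hx : 0 < infDist x Ω := by linarith [dist_nonneg (x := x) (y := y)]
  have hy : 0 < infDist y Ω := by
    linarith [(abs_le.1 (abs_infDist_sub_infDist_le Ω x y)).2, dist_nonneg (x := x) (y := y)]
  have hfin : (nearIndices Ω w (2 * A) x).Finite := finite_of_encard_le_coe hm
  set S := hfin.toFinset with hS_def
  have hmem : ∀ i ∈ S, i ∈ nearIndices Ω w (2 * A) x := fun i => hfin.mem_toFinset.1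
  have hcard : (S.card : ℝ) ≤ m := by
    rw [hfin.encard_eq_coe_toFinset_card] at hm
    exact_mod_cast hm
  have hxS : nearIndices Ω w A x ⊆ S := by
    rw [hfin.coe_toFinset]; exact nearIndices_mono (by linarith)
  have hyS : nearIndices Ω w A y ⊆ S := by
    rw [hfin.coe_toFinset]; exact nearIndices_subset_of_dist_lt hA hxy
  have hsum := hw.infDist_le_sum_whitneyBump hx hxδ hxS
  obtain ⟨k, hk⟩ : S.Nonempty := Finset.nonempty_iff_ne_empty.2 fun h => by
    rw [h, Finset.sum_empty] at hsum; exact hx.not_ge hsum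
  have hM : 0 ≤ M := (abs_nonneg _).trans (hv k (hmem k hk) k (hmem k hk))
  rw [whitneyAverage_eq_centerMass hxS, whitneyAverage_eq_centerMass hyS]
  calc |S.centerMass _ v - S.centerMass _ v|
      ≤ M * (∑ i ∈ S, |whitneyBump A Ω (w i) x - whitneyBump A Ω (w i) y|) /
          ∑ i ∈ S, whitneyBump A Ω (w i) x :=
        norm_centerMass_sub_centerMass_le (a := v) (fun i _ => whitneyBump_nonneg ..)
          (hx.trans_le hsum) (hy.trans_le (hw.infDist_le_sum_whitneyBump hy hyδ hyS))
          fun i hi j hj => hv i (hmem i hi) j (hmem j hj)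
    _ ≤ M * (m * ((A + 1) * dist x y)) / infDist x Ω := by
        gcongr
        calc ∑ i ∈ S, |whitneyBump A Ω (w i) x - whitneyBump A Ω (w i) y|
            ≤ S.card * ((A + 1) * dist x y) := by
              rw [← nsmul_eq_mul]
              exact Finset.sum_le_card_nsmul _ _ _ fun i _ =>
                abs_whitneyBump_sub_le (by linarith) Ω (w i) x y
          _ ≤ m * ((A + 1) * dist x y) := by gcongr

end WhitneyAverage

section HajlaszInequality

variable {X : Type*} [PseudoMetricSpace X]

/-- The pointwise inequality defining a Hajlasz gradient, required for every pair of points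
of `S`. -/
def HajlaszInequalityOn (f g : X → ℝ) (S : Set X) : Prop :=
  ∀ x ∈ S, ∀ y ∈ S, |f x - f y| ≤ dist x y * (g x + g y)

lemma HajlaszInequalityOn.cutoff_mul {S T : Set X} {φ : X → ℝ≥0} {F G Γ : X → ℝ} {L : ℝ≥0}
    (hFG : HajlaszInequalityOn F G S) (hφ : LipschitzWith L φ) (hφ_le : ∀ x, φ x ≤ 1)
    (hφS : ∀ x ∈ T \ S, φ x = 0) (hF : ∀ x ∈ S, |F x| ≤ Γ x) (hG : ∀ x, 0 ≤ G x)
    (hΓ : ∀ x, 0 ≤ Γ x) :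
    HajlaszInequalityOn (fun x => φ x * F x) (fun x => G x + L * Γ x) T := by
  have hsplit (x) (hx : x ∈ S) (y) (hy : y ∉ S → φ y = 0) :
      |φ x * F x - φ y * F y| ≤ dist x y * ((G x + L * Γ x) + (G y + L * Γ y)) := by
    have hmain : |(φ x : ℝ) - φ y| * |F x| ≤ L * dist x y * Γ x :=
      mul_le_mul (hφ.dist_le_mul x y) (hF x hx) (abs_nonneg _) (by positivity)
    have hrest : φ y * |F x - F y| ≤ dist x y * (G x + G y) := by
      by_cases hyS : y ∈ S
      · exact (mul_le_of_le_one_left (abs_nonneg _) (NNReal.coe_le_one.2 (hφ_le y))).trans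
          (hFG x hx y hyS)
      · rw [hy hyS, NNReal.coe_zero, zero_mul]
        exact mul_nonneg dist_nonneg (add_nonneg (hG x) (hG y))
    calc |φ x * F x - φ y * F y| = |(φ x - φ y) * F x + φ y * (F x - F y)| := by ring_nf
      _ ≤ |(φ x : ℝ) - φ y| * |F x| + φ y * |F x - F y| := by
        simpa only [abs_mul, NNReal.abs_eq] using abs_add_le ((φ x - φ y) * F x) (φ y * (F x - F y))
      _ ≤ L * dist x y * Γ x + dist x y * (G x + G y) := add_le_add hmain hrest
      _ ≤ L * dist x y * Γ x + dist x y * (G x + G y) + L * dist x y * Γ y :=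
        le_add_of_nonneg_right (mul_nonneg (by positivity) (hΓ y))
      _ = dist x y * ((G x + L * Γ x) + (G y + L * Γ y)) := by ring
  intro x hx y hy
  beta_reduce
  by_cases hxS : x ∈ S
  · exact hsplit x hxS y fun h => hφS y ⟨hy, h⟩
  by_cases hyS : y ∈ S
  · rw [abs_sub_comm, dist_comm, add_comm]
    exact hsplit y hyS x fun h => hφS x ⟨hx, h⟩
  · rw [hφS x ⟨hx, hxS⟩, hφS y ⟨hy, hyS⟩]
    have := hG x; have := hG y; have := hΓ x; have := hΓ y
    simp only [NNReal.coe_zero, zero_mul, sub_self, abs_zero]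
    positivity

end HajlaszInequality

section WhitneyExtension

variable {X ι : Type*} [PseudoMetricSpace X] {Ω N : Set X} {w z : ι → X} {f g Γ : X → ℝ}
  {A B δ : ℝ} {x y : X}

/-- The points of `Ω` at which the extension to `x` samples the given function: `x` itself if it
lies in `Ω`, and the sample points `z i` of the Whitney balls that reflect `x` otherwise. -/
def shadow (Ω : Set X) (w z : ι → X) (B : ℝ) (x : X) : Set X :=
  ({x} ∩ Ω) ∪ z '' nearIndices Ω w B x

lemma shadow_mono {B' : ℝ} (hB : B ≤ B') : shadow Ω w z B x ⊆ shadow Ω w z B' x :=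
  union_subset_union_right _ (image_mono (nearIndices_mono hB))

lemma mem_shadow_of_mem_nearIndices {i : ι} (hi : i ∈ nearIndices Ω w B x) :
    z i ∈ shadow Ω w z B x :=
  Or.inr (mem_image_of_mem z hi)

lemma IsWhitneyFamily.shadow_subset (hw : IsWhitneyFamily A δ Ω w)
    (hz : ∀ i, z i ∈ closedBall (w i) (infDist (w i) Ωᶜ / 10) \ N) (hx : x ∉ N) :
    shadow Ω w z B x ⊆ Ω \ N := by
  rintro _ (⟨rfl, hxΩ⟩ | ⟨i, -, rfl⟩)
  · exact ⟨hxΩ, hx⟩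
  · exact ⟨hw.closedBall_subset i (hz i).1, (hz i).2⟩

lemma dist_le_of_mem_shadow (hB : 0 ≤ B)
    (hz : ∀ i, z i ∈ closedBall (w i) (infDist (w i) Ωᶜ / 10)) (hy : y ∈ shadow Ω w z B x) :
    dist x y ≤ 2 * B * infDist x Ω := by
  rcases hy with ⟨rfl, -⟩ | ⟨i, hi, rfl⟩
  · rw [dist_self]; exact mul_nonneg (by linarith) infDist_nonneg
  · linarith [hi.1, mem_closedBall'.1 (hz i), dist_triangle x (w i) (z i),
      infDist_compl_le_of_mem_nearIndices hi, dist_nonneg (x := x) (y := w i)]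

open Classical in
/-- The extension of `f` from `Ω`: outside `Ω`, the average of the values of `f` at the sample
points `z i`. -/
def whitneyExtension (A : ℝ) (Ω : Set X) (w z : ι → X) (f : X → ℝ) : X → ℝ :=
  Ω.piecewise f (whitneyAverage A Ω w (f ∘ z))

lemma whitneyExtension_of_mem (hx : x ∈ Ω) : whitneyExtension A Ω w z f x = f x :=
  if_pos hx

lemma whitneyExtension_of_notMem (hx : x ∉ Ω) :
    whitneyExtension A Ω w z f x = whitneyAverage A Ω w (f ∘ z) x :=
  if_neg hx

lemma measurable_whitneyExtension [MeasurableSpace X] [OpensMeasurableSpace X] [Countable ι]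
    (hΩ : IsOpen Ω) (hf : Measurable f) : Measurable (whitneyExtension A Ω w z f) :=
  hf.piecewise hΩ.measurableSet (measurable_whitneyAverage ..)

lemma IsWhitneyFamily.whitneyExtension_mem_convexHull (hw : IsWhitneyFamily A δ Ω w)
    (hfin : (nearIndices Ω w A x).Finite) (hx : x ∉ Ω → 0 < infDist x Ω)
    (hxδ : infDist x Ω < δ) :
    whitneyExtension A Ω w z f x ∈ convexHull ℝ (f '' shadow Ω w z A x) := by
  by_cases hxΩ : x ∈ Ω
  · rw [whitneyExtension_of_mem hxΩ]
    exact subset_convexHull ℝ _ (mem_image_of_mem f (Or.inl ⟨rfl, hxΩ⟩))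
  · have hS : nearIndices Ω w A x ⊆ hfin.toFinset := hfin.coe_toFinset.ge
    rw [whitneyExtension_of_notMem hxΩ, whitneyAverage_eq_centerMass hS]
    refine Finset.centerMass_mem_convexHull _ (fun i _ => whitneyBump_nonneg ..)
      ((hx hxΩ).trans_le (hw.infDist_le_sum_whitneyBump (hx hxΩ) hxδ hS)) fun i hi => ?_
    exact mem_image_of_mem f (mem_shadow_of_mem_nearIndices (hfin.mem_toFinset.1 hi))

lemma IsWhitneyFamily.abs_whitneyExtension_le (hw : IsWhitneyFamily A δ Ω w)
    (hfin : (nearIndices Ω w A x).Finite) (hx : x ∉ Ω → 0 < infDist x Ω)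
    (hxδ : infDist x Ω < δ) {M : ℝ} (hM : ∀ y ∈ shadow Ω w z A x, |f y| ≤ M) :
    |whitneyExtension A Ω w z f x| ≤ M := by
  have hsub : f '' shadow Ω w z A x ⊆ Icc (-M) M :=
    image_subset_iff.2 fun y hy => abs_le.1 (hM y hy)
  exact abs_le.2 <| convexHull_min hsub (convex_Icc _ _) <|
    hw.whitneyExtension_mem_convexHull hfin hx hxδ

lemma IsWhitneyFamily.abs_whitneyExtension_sub_le_of_dist_lt (hw : IsWhitneyFamily A δ Ω w)
    (hA : 1 ≤ A) {m : ℕ} (hm : (nearIndices Ω w (2 * A) x).encard ≤ m)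
    (hz : ∀ i, z i ∈ closedBall (w i) (infDist (w i) Ωᶜ / 10) \ N)
    (hfg : HajlaszInequalityOn f g (Ω \ N)) {M : ℝ} (hM : 0 ≤ M)
    (hg : ∀ y ∈ shadow Ω w z (2 * A) x, g y ≤ M) (hx : x ∉ N)
    (hxδ : infDist x Ω < δ) (hyδ : infDist y Ω < δ) (hxy : dist x y < infDist x Ω / 2) :
    |whitneyExtension A Ω w z f x - whitneyExtension A Ω w z f y| ≤
      16 * A * (A + 1) * m * (dist x y * M) := by
  have hx0 : 0 < infDist x Ω := by linarith [dist_nonneg (x := x) (y := y)]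
  have hy0 : 0 < infDist y Ω := by
    linarith [(abs_le.1 (abs_infDist_sub_infDist_le Ω x y)).2]
  have hosc : ∀ i ∈ nearIndices Ω w (2 * A) x, ∀ j ∈ nearIndices Ω w (2 * A) x,
      |(f ∘ z) i - (f ∘ z) j| ≤ 16 * A * infDist x Ω * M := fun i hi j hj => by
    have hi' := mem_shadow_of_mem_nearIndices (z := z) hi
    have hj' := mem_shadow_of_mem_nearIndices (z := z) hj
    have hdist : dist (z i) (z j) ≤ 8 * A * infDist x Ω := by
      linarith [dist_triangle_left (z i) (z j) x,
        dist_le_of_mem_shadow (by linarith) (fun i => (hz i).1) hi',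
        dist_le_of_mem_shadow (by linarith) (fun i => (hz i).1) hj']
    calc |f (z i) - f (z j)|
        ≤ dist (z i) (z j) * (g (z i) + g (z j)) :=
          hfg _ (hw.shadow_subset hz hx hi') _ (hw.shadow_subset hz hx hj')
      _ ≤ dist (z i) (z j) * (2 * M) := by gcongr; linarith [hg _ hi', hg _ hj']
      _ ≤ 8 * A * infDist x Ω * (2 * M) := by gcongr
      _ = 16 * A * infDist x Ω * M := by ring
  rw [whitneyExtension_of_notMem (notMem_of_infDist_pos hx0),
    whitneyExtension_of_notMem (notMem_of_infDist_pos hy0)]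
  refine (hw.abs_whitneyAverage_sub_le hA hm hxδ hyδ hxy hosc).trans_eq ?_
  field_simp

lemma IsWhitneyFamily.abs_whitneyExtension_sub_le_of_le_dist (hw : IsWhitneyFamily A δ Ω w)
    (hA : 1 ≤ A) (hfin : ∀ x, (nearIndices Ω w A x).Finite)
    (hz : ∀ i, z i ∈ closedBall (w i) (infDist (w i) Ωᶜ / 10) \ N)
    (hfg : HajlaszInequalityOn f g (Ω \ N)) (hΓ : ∀ x, 0 ≤ Γ x)
    (hg : ∀ x, ∀ y ∈ shadow Ω w z A x, g y ≤ Γ x) (hxN : x ∉ N) (hyN : y ∉ N)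
    (hx : x ∉ Ω → 0 < infDist x Ω) (hy : y ∉ Ω → 0 < infDist y Ω)
    (hxδ : infDist x Ω < δ) (hyδ : infDist y Ω < δ) (hxy : infDist x Ω / 2 ≤ dist x y) :
    |whitneyExtension A Ω w z f x - whitneyExtension A Ω w z f y| ≤
      (10 * A + 1) * (dist x y * (Γ x + Γ y)) := by
  obtain ⟨_, ⟨x', hx', rfl⟩, _, ⟨y', hy', rfl⟩, hle⟩ := convexHull_exists_dist_ge2
    (hw.whitneyExtension_mem_convexHull (z := z) (f := f) (hfin x) hx hxδ)
    (hw.whitneyExtension_mem_convexHull (z := z) (f := f) (hfin y) hy hyδ)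
  have hdist : dist x' y' ≤ (10 * A + 1) * dist x y := by
    have hxx' := dist_le_of_mem_shadow (by linarith) (fun i => (hz i).1) hx'
    have hyy' := dist_le_of_mem_shadow (by linarith) (fun i => (hz i).1) hy'
    have := (abs_le.1 (abs_infDist_sub_infDist_le Ω x y)).1
    nlinarith [dist_triangle4 x' x y y', dist_comm x' x]
  calc |whitneyExtension A Ω w z f x - whitneyExtension A Ω w z f y|
      ≤ |f x' - f y'| := hle
    _ ≤ dist x' y' * (g x' + g y') :=
      hfg _ (hw.shadow_subset hz hxN hx') _ (hw.shadow_subset hz hyN hy')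
    _ ≤ dist x' y' * (Γ x + Γ y) := by gcongr; exacts [hg x _ hx', hg y _ hy']
    _ ≤ (10 * A + 1) * dist x y * (Γ x + Γ y) := by
      gcongr; exact add_nonneg (hΓ x) (hΓ y)
    _ = (10 * A + 1) * (dist x y * (Γ x + Γ y)) := by ring

lemma IsWhitneyFamily.hajlaszInequalityOn_whitneyExtension (hw : IsWhitneyFamily A δ Ω w)
    (hA : 1 ≤ A) {m : ℕ} (hm : ∀ x, (nearIndices Ω w (2 * A) x).encard ≤ m)
    (hz : ∀ i, z i ∈ closedBall (w i) (infDist (w i) Ωᶜ / 10) \ N)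
    (hfg : HajlaszInequalityOn f g (Ω \ N)) (hΓ : ∀ x, 0 ≤ Γ x)
    (hg : ∀ x, ∀ y ∈ shadow Ω w z (2 * A) x, g y ≤ Γ x) (hΩ : IsOpen Ω) (hne : Ω.Nonempty) :
    HajlaszInequalityOn (whitneyExtension A Ω w z f)
      (fun x => (16 * A * (A + 1) * m + (10 * A + 1)) * Γ x)
      (thickening δ Ω \ (N ∪ frontier Ω)) := by
  rintro x ⟨hxδ, hx⟩ y ⟨hyδ, hy⟩
  rw [mem_union, not_or] at hx hy
  rw [mem_thickening_iff_infDist_lt hne] at hxδ hyδ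
  have hfin (x : X) : (nearIndices Ω w A x).Finite :=
    (finite_of_encard_le_coe (hm x)).subset (nearIndices_mono (by linarith))
  have hxy : 0 ≤ dist x y * (Γ x + Γ y) := mul_nonneg dist_nonneg (add_nonneg (hΓ x) (hΓ y))
  rw [← mul_add, mul_left_comm, add_mul]
  rcases lt_or_ge (dist x y) (infDist x Ω / 2) with hnear | hfar
  · calc |whitneyExtension A Ω w z f x - whitneyExtension A Ω w z f y|
        ≤ 16 * A * (A + 1) * m * (dist x y * Γ x) :=
          hw.abs_whitneyExtension_sub_le_of_dist_lt hA (hm x) hz hfg (hΓ x) (hg x) hx.1 hxδ hyδ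
            hnear
      _ ≤ 16 * A * (A + 1) * m * (dist x y * (Γ x + Γ y)) := by
          gcongr; exact le_add_of_nonneg_right (hΓ y)
      _ ≤ _ := le_add_of_nonneg_right (by positivity)
  · calc |whitneyExtension A Ω w z f x - whitneyExtension A Ω w z f y|
        ≤ (10 * A + 1) * (dist x y * (Γ x + Γ y)) :=
          hw.abs_whitneyExtension_sub_le_of_le_dist hA hfin hz hfg hΓ
            (fun x y hy => hg x y (shadow_mono (by linarith) hy)) hx.1 hy.1
            (fun h => infDist_pos_of_notMem_frontier hΩ hne h hx.2)
            (fun h => infDist_pos_of_notMem_frontier hΩ hne h hy.2) hxδ hyδ hfar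
      _ ≤ _ := le_add_of_nonneg_left (by positivity)

lemma IsWhitneyFamily.abs_thickenedIndicator_mul_whitneyExtension_le
    (hw : IsWhitneyFamily A δ Ω w) (hfin : (nearIndices Ω w A x).Finite) (hΩ : IsOpen Ω)
    (hne : Ω.Nonempty) (hδ : 0 < δ) {M : ℝ} (hM : 0 ≤ M)
    (hf : ∀ y ∈ shadow Ω w z A x, |f y| ≤ M) (hx : x ∉ frontier Ω) :
    |thickenedIndicator hδ Ω x * whitneyExtension A Ω w z f x| ≤ M := by
  by_cases hxδ : x ∈ thickening δ Ω
  · have hext := hw.abs_whitneyExtension_le hfin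
      (fun h => infDist_pos_of_notMem_frontier hΩ hne h hx)
      ((mem_thickening_iff_infDist_lt hne).1 hxδ) hf
    rw [abs_mul, NNReal.abs_eq]
    exact (mul_le_of_le_one_left (abs_nonneg _)
      (NNReal.coe_le_one.2 (thickenedIndicator_le_one hδ Ω x))).trans hext
  · rwa [thickenedIndicator_zero hδ Ω hxδ, NNReal.coe_zero, zero_mul, abs_zero]

lemma IsWhitneyFamily.hajlaszInequalityOn_thickenedIndicator_mul_whitneyExtension
    (hw : IsWhitneyFamily A δ Ω w) (hA : 1 ≤ A) {m : ℕ}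
    (hm : ∀ x, (nearIndices Ω w (2 * A) x).encard ≤ m)
    (hz : ∀ i, z i ∈ closedBall (w i) (infDist (w i) Ωᶜ / 10) \ N)
    (hfg : HajlaszInequalityOn f g (Ω \ N)) (hΓ : ∀ x, 0 ≤ Γ x)
    (hf : ∀ x, ∀ y ∈ shadow Ω w z (2 * A) x, |f y| ≤ Γ x)
    (hg : ∀ x, ∀ y ∈ shadow Ω w z (2 * A) x, g y ≤ Γ x) (hΩ : IsOpen Ω) (hne : Ω.Nonempty)
    (hδ : 0 < δ) :
    HajlaszInequalityOn (fun x => thickenedIndicator hδ Ω x * whitneyExtension A Ω w z f x)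
      (fun x => (16 * A * (A + 1) * m + (10 * A + 1) + δ⁻¹) * Γ x) (N ∪ frontier Ω)ᶜ := by
  have hfin (x : X) : (nearIndices Ω w A x).Finite :=
    (finite_of_encard_le_coe (hm x)).subset (nearIndices_mono (by linarith))
  have hcutoff := (hw.hajlaszInequalityOn_whitneyExtension hA hm hz hfg hΓ hg hΩ hne).cutoff_mul
    (T := (N ∪ frontier Ω)ᶜ) (Γ := Γ) (lipschitzWith_thickenedIndicator hδ Ω)
    (thickenedIndicator_le_one hδ Ω)
    (fun x hx => thickenedIndicator_zero hδ Ω fun h => hx.2 ⟨h, hx.1⟩)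
    (fun x hx => hw.abs_whitneyExtension_le (hfin x)
      (fun h => infDist_pos_of_notMem_frontier hΩ hne h fun hfr => hx.2 (Or.inr hfr))
      ((mem_thickening_iff_infDist_lt hne).1 hx.1)
      fun y hy => hf x y (shadow_mono (by linarith) hy))
    (fun x => mul_nonneg (by positivity) (hΓ x)) hΓ
  simpa only [NNReal.coe_inv, Real.coe_toNNReal δ hδ.le, ← add_mul] using hcutoff

end WhitneyExtension

section ShadowSum

lemma exists_mem_sdiff_null_mul_measure_le_lintegral {α : Type*} [MeasurableSpace α]
    {μ : Measure α} {s N : Set α} {h : α → ℝ≥0∞} (hs₀ : μ s ≠ 0) (hs : μ s ≠ ⊤) (hN : μ N = 0)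
    (hh : AEMeasurable h (μ.restrict s)) :
    ∃ a ∈ s \ N, h a * μ s ≤ ∫⁻ x in s, h x ∂μ := by
  have hμ : μ (s \ N) = μ s := measure_sdiff_null hN
  obtain ⟨a, ha, hle⟩ := exists_le_setLAverage (hμ ▸ hs₀) (hμ ▸ hs)
    (hh.mono_measure (Measure.restrict_mono_set μ sdiff_subset))
  rw [setLAverage_eq, hμ, ENNReal.le_div_iff_mul_le (Or.inl hs₀) (Or.inl hs)] at hle
  exact ⟨a, ha, hle.trans (lintegral_mono_set sdiff_subset)⟩

variable {X ι : Type*} [PseudoMetricSpace X] {Ω : Set X} {w z : ι → X} {B : ℝ} {h : X → ℝ≥0∞}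
  {x y : X}

/-- The sum of `h` over the shadow of `x`. Sample points are counted with multiplicity, which is
what makes the integral easy to compute. -/
def shadowSum (Ω : Set X) (w z : ι → X) (B : ℝ) (h : X → ℝ≥0∞) (x : X) : ℝ≥0∞ :=
  Ω.indicator h x + ∑' i, {x | i ∈ nearIndices Ω w B x}.indicator (fun _ => h (z i)) x

lemma le_shadowSum (hy : y ∈ shadow Ω w z B x) : h y ≤ shadowSum Ω w z B h x := by
  rcases hy with ⟨rfl, hy⟩ | ⟨i, hi, rfl⟩
  · exact (indicator_of_mem hy h).symm.trans_le (le_add_of_nonneg_right zero_le)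
  · calc h (z i) = {x | i ∈ nearIndices Ω w B x}.indicator (fun _ => h (z i)) x :=
          (indicator_of_mem (s := {x | i ∈ nearIndices Ω w B x}) hi fun _ => h (z i)).symm
      _ ≤ ∑' i, {x | i ∈ nearIndices Ω w B x}.indicator (fun _ => h (z i)) x := ENNReal.le_tsum i
      _ ≤ shadowSum Ω w z B h x := le_add_of_nonneg_left zero_le

lemma shadowSum_ne_top (hfin : (nearIndices Ω w B x).Finite) (hh : ∀ y, h y ≠ ⊤) :
    shadowSum Ω w z B h x ≠ ⊤ := by
  have hindicator (s : Set X) (k : X → ℝ≥0∞) (hk : ∀ y, k y ≠ ⊤) : s.indicator k x ≠ ⊤ := by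
    by_cases hx : x ∈ s <;> simp [hx, hk]
  refine ENNReal.add_ne_top.2 ⟨hindicator _ _ hh, ?_⟩
  rw [tsum_eq_sum (s := hfin.toFinset) fun i hi => indicator_of_notMem (by simpa using hi) _]
  exact ENNReal.sum_ne_top.2 fun i _ => hindicator _ _ fun _ => hh (z i)

variable [MeasurableSpace X] [OpensMeasurableSpace X]

lemma measurableSet_setOf_mem_nearIndices (Ω : Set X) (w : ι → X) (B : ℝ) (i : ι) :
    MeasurableSet {x | i ∈ nearIndices Ω w B x} :=
  (isOpen_setOf_mem_nearIndices Ω w B i).measurableSet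

lemma measurable_shadowSum [Countable ι] (hΩ : IsOpen Ω) (hh : Measurable h) :
    Measurable (shadowSum Ω w z B h) :=
  (hh.indicator hΩ.measurableSet).add <| Measurable.tsum fun i =>
    measurable_const.indicator (measurableSet_setOf_mem_nearIndices Ω w B i)

lemma lintegral_shadowSum [Countable ι] (μ : Measure X) (hΩ : IsOpen Ω) (hh : Measurable h) :
    ∫⁻ x, shadowSum Ω w z B h x ∂μ =
      (∫⁻ x in Ω, h x ∂μ) + ∑' i, h (z i) * μ {x | i ∈ nearIndices Ω w B x} := by
  have hmeas := measurableSet_setOf_mem_nearIndices Ω w B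
  simp only [shadowSum]
  rw [lintegral_add_left (hh.indicator hΩ.measurableSet), lintegral_indicator hΩ.measurableSet,
    lintegral_tsum fun i => (measurable_const.indicator (hmeas i)).aemeasurable]
  simp only [lintegral_indicator (hmeas _), setLIntegral_const]

end ShadowSum

section Integration

variable {E ι : Type*} [NormedAddCommGroup E] [NormedSpace ℝ E] [FiniteDimensional ℝ E]
  [MeasurableSpace E] [BorelSpace E] {Ω N : Set E} {w z : ι → E} {A B δ : ℝ}
  (μ : Measure E) [μ.IsAddHaarMeasure]

lemma measure_setOf_mem_nearIndices_le (hB : 0 ≤ B) (i : ι) :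
    μ {x | i ∈ nearIndices Ω w B x} ≤ ENNReal.ofReal ((10 * B ^ 2) ^ finrank ℝ E) *
      μ (closedBall (w i) (infDist (w i) Ωᶜ / 10)) := by
  have hd : 0 ≤ infDist (w i) Ωᶜ := infDist_nonneg
  refine (measure_mono (setOf_mem_nearIndices_subset_closedBall hB i)).trans_eq ?_
  rw [show B ^ 2 * infDist (w i) Ωᶜ = 10 * B ^ 2 * (infDist (w i) Ωᶜ / 10) by ring,
    Measure.addHaar_closedBall μ _ (by positivity), Measure.addHaar_closedBall μ _ (by positivity),
    mul_pow, ENNReal.ofReal_mul (by positivity), mul_assoc]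

lemma IsWhitneyFamily.lintegral_shadowSum_le [Countable ι] (hw : IsWhitneyFamily A δ Ω w)
    (hΩ : IsOpen Ω) (hB : 0 ≤ B) {h : E → ℝ≥0∞} (hh : Measurable h)
    (hz : ∀ i, h (z i) * μ (closedBall (w i) (infDist (w i) Ωᶜ / 10)) ≤
      ∫⁻ x in closedBall (w i) (infDist (w i) Ωᶜ / 10), h x ∂μ) :
    ∫⁻ x, shadowSum Ω w z B h x ∂μ ≤
      (1 + ENNReal.ofReal ((10 * B ^ 2) ^ finrank ℝ E)) * ∫⁻ x in Ω, h x ∂μ := by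
  rw [lintegral_shadowSum μ hΩ hh, add_mul, one_mul]
  set κ := ENNReal.ofReal ((10 * B ^ 2) ^ finrank ℝ E)
  gcongr
  calc ∑' i, h (z i) * μ {x | i ∈ nearIndices Ω w B x}
      ≤ ∑' i, κ * ∫⁻ x in closedBall (w i) (infDist (w i) Ωᶜ / 10), h x ∂μ := by
        refine ENNReal.tsum_le_tsum fun i => ?_
        calc h (z i) * μ {x | i ∈ nearIndices Ω w B x}
            ≤ h (z i) * (κ * μ (closedBall (w i) (infDist (w i) Ωᶜ / 10))) := by
              gcongr; exact measure_setOf_mem_nearIndices_le μ hB i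
          _ ≤ κ * ∫⁻ x in closedBall (w i) (infDist (w i) Ωᶜ / 10), h x ∂μ := by
              rw [mul_left_comm]; gcongr; exact hz i
    _ = κ * ∫⁻ x in ⋃ i, closedBall (w i) (infDist (w i) Ωᶜ / 10), h x ∂μ := by
        rw [ENNReal.tsum_mul_left,
          lintegral_iUnion (fun _ => measurableSet_closedBall) hw.pairwise_disjoint]
    _ ≤ κ * ∫⁻ x in Ω, h x ∂μ := by
        gcongr; exact iUnion_subset hw.closedBall_subset

lemma IsWhitneyFamily.exists_shadow_bound [Countable ι] (hw : IsWhitneyFamily A δ Ω w)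
    (hΩ : IsOpen Ω) (hB : 0 ≤ B) (hfin : ∀ x, (nearIndices Ω w B x).Finite) {p : ℝ≥0∞}
    (hp₀ : p ≠ 0) (hp : p ≠ ⊤) {u : E → ℝ} (hu : Measurable u) (hN : μ N = 0) :
    ∃ (z : ι → E) (Γ : E → ℝ), (∀ i, z i ∈ closedBall (w i) (infDist (w i) Ωᶜ / 10) \ N) ∧
      Measurable Γ ∧ (∀ x, 0 ≤ Γ x) ∧ (∀ x, ∀ y ∈ shadow Ω w z B x, |u y| ≤ Γ x) ∧
      eLpNorm Γ p μ ≤ (1 + ENNReal.ofReal ((10 * B ^ 2) ^ finrank ℝ E)) ^ p.toReal⁻¹ *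
        eLpNorm u p (μ.restrict Ω) := by
  have hq : 0 < p.toReal := ENNReal.toReal_pos hp₀ hp
  set h : E → ℝ≥0∞ := fun x => ‖u x‖ₑ ^ p.toReal
  have hh : Measurable h := hu.enorm.pow_const _
  -- Sampling where `|u| ^ p` is below its mean takes the place of a maximal function.
  choose z hz hz_mean using fun i => exists_mem_sdiff_null_mul_measure_le_lintegral
    (measure_closedBall_pos μ (w i) (r := infDist (w i) Ωᶜ / 10)
      (div_pos (hw.infDist_compl_pos i) (by norm_num))).ne'
    measure_closedBall_lt_top.ne hN hh.aemeasurable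
  set H := shadowSum Ω w z B h
  have hH (x : E) : H x ^ p.toReal⁻¹ ≠ ⊤ := ENNReal.rpow_ne_top_of_nonneg (by positivity) <|
    shadowSum_ne_top (hfin x) fun y => ENNReal.rpow_ne_top_of_nonneg hq.le enorm_ne_top
  refine ⟨z, fun x => (H x ^ p.toReal⁻¹).toReal, hz,
    ((measurable_shadowSum hΩ hh).pow_const _).ennreal_toReal, fun x => ENNReal.toReal_nonneg,
    fun x y hy => ?_, ?_⟩
  · rw [← Real.norm_eq_abs, ← toReal_enorm]
    exact ENNReal.toReal_mono (hH x) ((ENNReal.le_rpow_inv_iff hq).2 (le_shadowSum hy))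
  · simp only [eLpNorm_eq_lintegral_rpow_enorm_toReal hp₀ hp, Real.enorm_toReal (hH _), one_div,
      ENNReal.rpow_inv_rpow hq.ne']
    rw [← ENNReal.mul_rpow_of_nonneg _ _ (by positivity)]
    gcongr
    exact hw.lintegral_shadowSum_le μ hΩ hB hh hz_mean

end Integration

section Extension

lemma eLpNorm_abs_add_le {α : Type*} [MeasurableSpace α] {μ : Measure α} {f g : α → ℝ}
    (hf : AEStronglyMeasurable f μ) (hg : AEStronglyMeasurable g μ) (p : ℝ≥0∞) :
    eLpNorm (fun x => |f x| + g x) p μ ≤ LpAddConst p * (eLpNorm f p μ + eLpNorm g p μ) := by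
  rw [← eLpNorm_norm f]
  exact eLpNorm_add_le' hf.norm hg p

variable {E ι : Type*} [NormedAddCommGroup E] [NormedSpace ℝ E] [FiniteDimensional ℝ E]
  [MeasurableSpace E] [BorelSpace E] (μ : Measure E) [μ.IsAddHaarMeasure] {Ω N : Set E}
  {w : ι → E} {A c δ : ℝ} {p : ℝ≥0∞} {f g : E → ℝ}

lemma IsWhitneyFamily.exists_extension_le_majorant [Countable ι] (hw : IsWhitneyFamily A δ Ω w)
    (hA : 1 ≤ A) {m : ℕ} (hm : ∀ x, (nearIndices Ω w (2 * A) x).encard ≤ m) (hδ : 0 < δ)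
    (hΩ : IsOpen Ω) (hne : Ω.Nonempty) (hp₀ : p ≠ 0) (hp : p ≠ ⊤) (hf : Measurable f)
    (hg : Measurable g) (hg₀ : ∀ x, 0 ≤ g x) (hN : μ N = 0)
    (hfg : HajlaszInequalityOn f g (Ω \ N)) :
    ∃ F Γ : E → ℝ, EqOn F f Ω ∧ Measurable F ∧ Measurable Γ ∧ (∀ x, 0 ≤ Γ x) ∧
      (∀ x ∉ frontier Ω, |F x| ≤ Γ x) ∧
      HajlaszInequalityOn F ((16 * A * (A + 1) * m + (10 * A + 1) + δ⁻¹) • Γ)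
        (N ∪ frontier Ω)ᶜ ∧
      eLpNorm Γ p μ ≤ (1 + ENNReal.ofReal ((10 * (2 * A) ^ 2) ^ finrank ℝ E)) ^ p.toReal⁻¹ *
        (LpAddConst p * (eLpNorm f p (μ.restrict Ω) + eLpNorm g p (μ.restrict Ω))) := by
  have hfin (x : E) : (nearIndices Ω w (2 * A) x).Finite := finite_of_encard_le_coe (hm x)
  obtain ⟨z, Γ, hz, hΓ_meas, hΓ, hshadow, hΓ_norm⟩ := hw.exists_shadow_bound μ hΩ
    (by linarith) hfin hp₀ hp (show Measurable fun x => |f x| + g x from hf.norm.add hg) hN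
  have hbound (x y) (hy : y ∈ shadow Ω w z (2 * A) x) : |f y| ≤ Γ x ∧ g y ≤ Γ x := by
    have := le_of_abs_le (hshadow x y hy)
    constructor <;> linarith [hg₀ y, abs_nonneg (f y)]
  refine ⟨fun x => thickenedIndicator hδ Ω x * whitneyExtension A Ω w z f x, Γ, fun x hx => ?_,
    ?_, hΓ_meas, hΓ, fun x hx => ?_, ?_, hΓ_norm.trans ?_⟩
  · simp only [thickenedIndicator_one hδ Ω hx, whitneyExtension_of_mem hx, NNReal.coe_one, one_mul]
  · exact (thickenedIndicator hδ Ω).continuous.measurable.coe_nnreal_real.mul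
      (measurable_whitneyExtension hΩ hf)
  · exact hw.abs_thickenedIndicator_mul_whitneyExtension_le
      ((hfin x).subset (nearIndices_mono (by linarith))) hΩ hne hδ (hΓ x)
      (fun y hy => (hbound x y (shadow_mono (by linarith) hy)).1) hx
  · exact hw.hajlaszInequalityOn_thickenedIndicator_mul_whitneyExtension hA hm hz hfg hΓ
      (fun x y hy => (hbound x y hy).1) (fun x y hy => (hbound x y hy).2) hΩ hne hδ
  · gcongr
    exact eLpNorm_abs_add_le hf.aestronglyMeasurable hg.aestronglyMeasurable p

theorem HasCorkscrew.exists_hajlasz_extension (hcork : HasCorkscrew c δ Ω) (hc : 1 ≤ c)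
    (hδ : 0 < δ) (hΩ : IsOpen Ω) (hne : Ω.Nonempty) (hp₀ : p ≠ 0) (hp : p ≠ ⊤) :
    ∃ K : ℝ≥0∞, K ≠ ⊤ ∧ ∀ f g : E → ℝ, Measurable f → Measurable g → (∀ x, 0 ≤ g x) →
      ∀ N, μ N = 0 → HajlaszInequalityOn f g (Ω \ N) →
      ∃ F G : E → ℝ, EqOn F f Ω ∧ Measurable F ∧ Measurable G ∧ (∀ x, 0 ≤ G x) ∧
        (∃ N', μ N' = 0 ∧ HajlaszInequalityOn F G N'ᶜ) ∧
        eLpNorm F p μ + eLpNorm G p μ ≤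
          K * (eLpNorm f p (μ.restrict Ω) + eLpNorm g p (μ.restrict Ω)) := by
  obtain ⟨u, hu, hw⟩ := hcork.exists_isWhitneyFamily hc
  have : Countable u := hu.to_subtype
  obtain ⟨m, hm⟩ := hw.exists_encard_nearIndices_le (B := 2 * (7 * c)) (by linarith)
  have hfrontier : μ (frontier Ω) = 0 := hcork.measure_frontier_eq_zero (by linarith) hδ μ
  set C : ℝ := 16 * (7 * c) * (7 * c + 1) * m + (10 * (7 * c) + 1) + δ⁻¹
  set K : ℝ≥0∞ := (1 + ENNReal.ofReal ((10 * (2 * (7 * c)) ^ 2) ^ finrank ℝ E)) ^ p.toReal⁻¹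
  have hK : K ≠ ⊤ := ENNReal.rpow_ne_top_of_nonneg (by positivity) (by finiteness)
  refine ⟨(1 + ‖C‖ₑ) * (K * LpAddConst p), ENNReal.mul_ne_top (by finiteness)
    (ENNReal.mul_ne_top hK (LpAddConst_lt_top p).ne), fun f g hf hg hg₀ N hN hfg => ?_⟩
  obtain ⟨F, Γ, hF_eq, hF, hΓ, hΓ₀, hFΓ, hFG, hΓ_norm⟩ := hw.exists_extension_le_majorant μ
    (by linarith) hm hδ hΩ hne hp₀ hp hf hg hg₀ hN hfg
  have hF_norm : eLpNorm F p μ ≤ eLpNorm Γ p μ :=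
    eLpNorm_mono_ae_real ((measure_eq_zero_iff_ae_notMem.1 hfrontier).mono hFΓ)
  refine ⟨F, C • Γ, hF_eq, hF, hΓ.const_smul C, fun x => mul_nonneg (by positivity) (hΓ₀ x),
    ⟨N ∪ frontier Ω, measure_union_null hN hfrontier, hFG⟩, ?_⟩
  calc eLpNorm F p μ + eLpNorm (C • Γ) p μ
      ≤ eLpNorm Γ p μ + ‖C‖ₑ * eLpNorm Γ p μ :=
        add_le_add hF_norm (eLpNorm_const_smul C Γ p μ).le
    _ = (1 + ‖C‖ₑ) * eLpNorm Γ p μ := by rw [add_mul, one_mul]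
    _ ≤ (1 + ‖C‖ₑ) * (K * (LpAddConst p *
          (eLpNorm f p (μ.restrict Ω) + eLpNorm g p (μ.restrict Ω)))) := by gcongr
    _ = _ := by ring

variable {n : ℕ}

lemma lpNorm_eq_eLpNorm {p : ℝ} (hp : 0 < p) (g : EuclideanSpace ℝ (Fin n) → ℝ)
    (μ : Measure (EuclideanSpace ℝ (Fin n))) :
    _root_.lpNorm n p g μ = eLpNorm g (ENNReal.ofReal p) μ := by
  rw [eLpNorm_eq_lintegral_rpow_enorm_toReal (by simpa using hp) ENNReal.ofReal_ne_top,
    ENNReal.toReal_ofReal hp.le]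
  simp only [_root_.lpNorm, Real.enorm_eq_ofReal_abs]

lemma IsHajlaszGradientOn.exists_hajlaszInequalityOn_of_ae_eq
    {f f' g : EuclideanSpace ℝ (Fin n) → ℝ} {Ω : Set (EuclideanSpace ℝ (Fin n))}
    (h : IsHajlaszGradientOn n f g Ω) (hΩ : MeasurableSet Ω)
    (hff' : f =ᵐ[volume.restrict Ω] f') :
    ∃ N, volume N = 0 ∧ HajlaszInequalityOn f' g (Ω \ N) := by
  obtain ⟨-, -, N, hN, hfg⟩ := h
  have hne : volume {x | ¬(x ∈ Ω → f x = f' x)} = 0 := (ae_restrict_iff' hΩ).1 hff'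
  refine ⟨N ∪ {x | ¬(x ∈ Ω → f x = f' x)}, measure_union_null hN hne, ?_⟩
  rintro x ⟨hxΩ, hx⟩ y ⟨hyΩ, hy⟩
  simp only [mem_union, mem_ofPred_eq, not_or, not_not] at hx hy
  rw [← hx.2 hxΩ, ← hy.2 hyΩ, dist_eq_norm]
  exact hfg x ⟨hxΩ, hx.1⟩ y ⟨hyΩ, hy.1⟩

end Extension

theorem extension_from_bounded_uniform_domain_general
    (n : ℕ) (hn : 1 ≤ n) (p : ℝ) (hp : 0 < p) (c : ℝ) (hc : 1 ≤ c)
    (Ω : Set (EuclideanSpace ℝ (Fin n))) (hΩ : IsUniformDomain n c Ω) :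
    ∃ C : ℝ, 0 < C ∧
      ∀ f : EuclideanSpace ℝ (Fin n) → ℝ,
        AEStronglyMeasurable f (volume.restrict Ω) →
        lpNorm n p f (volume.restrict Ω) ≠ ⊤ →
        ∀ g : EuclideanSpace ℝ (Fin n) → ℝ, IsHajlaszGradientOn n f g Ω →
          lpNorm n p g (volume.restrict Ω) ≠ ⊤ →
          ∃ F G : EuclideanSpace ℝ (Fin n) → ℝ,
            (∀ᵐ x ∂(volume.restrict Ω), F x = f x) ∧
            AEStronglyMeasurable F volume ∧ lpNorm n p F volume ≠ ⊤ ∧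
            IsHajlaszGradientOn n F G univ ∧
            lpNorm n p F volume + lpNorm n p G volume ≤
              ENNReal.ofReal C *
                (lpNorm n p f (volume.restrict Ω) + lpNorm n p g (volume.restrict Ω)) := by
  simp only [lpNorm_eq_eLpNorm hp]
  obtain ⟨δ, hδ, hcork⟩ := hΩ.exists_hasCorkscrew hn
  obtain ⟨K, hK, hext⟩ := hcork.exists_hajlasz_extension volume hc hδ hΩ.1 hΩ.2.1.nonempty
    (p := ENNReal.ofReal p) (by simpa using hp) ENNReal.ofReal_ne_top
  have hK_le : K ≤ ENNReal.ofReal (K.toReal + 1) :=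
    ENNReal.le_ofReal_iff_toReal_le hK (by positivity) |>.2 (by linarith)
  refine ⟨K.toReal + 1, by positivity, fun f hf hf_norm g hg hg_norm => ?_⟩
  obtain ⟨N, hN, hfg⟩ := hg.exists_hajlaszInequalityOn_of_ae_eq hΩ.1.measurableSet hf.ae_eq_mk
  obtain ⟨F, G, hF_eq, hF, hG, hG₀, ⟨N', hN', hFG⟩, hnorm⟩ :=
    hext _ g hf.stronglyMeasurable_mk.measurable hg.1 hg.2.1 N hN hfg
  rw [eLpNorm_congr_ae hf.ae_eq_mk.symm] at hnorm
  have hbound := hnorm.trans (mul_le_mul_left hK_le _)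
  refine ⟨F, G, ?_, hF.aestronglyMeasurable, ?_, ⟨hG, hG₀, N', hN', ?_⟩, hbound⟩
  · filter_upwards [ae_restrict_mem hΩ.1.measurableSet, hf.ae_eq_mk] with x hx hfx
    exact (hF_eq hx).trans hfx.symm
  · exact ne_top_of_le_ne_top (by finiteness) (le_self_add.trans hbound)
  · simpa only [HajlaszInequalityOn, dist_eq_norm, compl_eq_univ_sdiff] using hFG

/-- **Proposition 3.7.** Bounded extension from a bounded `c`-uniform domain: every
`f ∈ M^{1,p}(Ω)` extends to `F ∈ M^{1,p}(ℝⁿ) (= H^{1,p}(ℝⁿ))` with norm control. -/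
theorem extension_from_bounded_uniform_domain
    (n : ℕ) (hn : 1 ≤ n) (p : ℝ) (hp1 : (n : ℝ) / (n + 1) < p) (hp2 : p ≤ 1)
    (c : ℝ) (hc : 1 ≤ c) (Ω : Set (EuclideanSpace ℝ (Fin n)))
    (hΩ : IsUniformDomain n c Ω) (hΩb : Bornology.IsBounded Ω) :
    ∃ C : ℝ, 0 < C ∧
      ∀ f : EuclideanSpace ℝ (Fin n) → ℝ,
        AEStronglyMeasurable f (volume.restrict Ω) →
        lpNorm n p f (volume.restrict Ω) ≠ ⊤ →
        ∀ g : EuclideanSpace ℝ (Fin n) → ℝ, IsHajlaszGradientOn n f g Ω →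
          lpNorm n p g (volume.restrict Ω) ≠ ⊤ →
          ∃ F G : EuclideanSpace ℝ (Fin n) → ℝ,
            (∀ᵐ x ∂(volume.restrict Ω), F x = f x) ∧
            AEStronglyMeasurable F volume ∧ lpNorm n p F volume ≠ ⊤ ∧
            IsHajlaszGradientOn n F G univ ∧
            lpNorm n p F volume + lpNorm n p G volume ≤
              ENNReal.ofReal C *
                (lpNorm n p f (volume.restrict Ω) + lpNorm n p g (volume.restrict Ω)) :=
  extension_from_bounded_uniform_domain_general n hn p (lt_of_le_of_lt (by positivity) hp1) c hc
    Ω hΩ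
end
end
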